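/- arXiv:1204.4397 — 3 statements merged into one kernel-verified Lean document; each statement's English description precedes it below -/
import Mathlib

section
/- Let (u, v) be a C²-smooth solution of the p-system on the whole cylinder ℝ × ℝ (1-periodic in x). Then either the hyperbolic region U₋ = {(t,x) : u(t,x) < 0} is the whole cylinder and u, v are constants everywhere, or U₋ is empty, i.e. u(t, x) ≥ 0 for all (t, x). -/
/-!
Write `c(u) = √(-p'(u))` for the characteristic speed in the hyperbolic region and `q' = -c`.
The Riemann invariants `r = v + q(u)` and `s = v - q(u)` are constant along `x' = -c` and `x' = c`
respectively, and Lax's weighted gradient `R = √c r_x` satisfies `R' = p''/(4 c² √c) R²` along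
`r`-characteristics (`Sol.hasDerivAt_Rw`); the same holds for `√c s_x` along `s`-characteristics.

*Trapping* (`Sol.exists_char`). If `r_x > 0` at a hyperbolic point, `R` does not decrease forward
in time, while it would have to tend to `0` at the boundary `c = 0`; so the forward
characteristic stays hyperbolic forever. By the reflections `(t, x, v) ↦ (σt, τx, στv)`,
`σ, τ = ±1`, the forward `s`-characteristic is trapped where `s_x > 0`, and the backward one where
`s_x < 0`.

*No point with `r_x > 0`* (`Sol.rx_nonpos`). Follow the trapped `r`-characteristic `γ` issued at
time `t₀`, and let `m` bound `s` below on the circle `t = t₀`. If `s ≥ m` along `γ`, then `q(u)`,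
hence `u`, is bounded along `γ`, and the Riccati equation blows up in finite time
(`Sol.exists_s_lt`). Otherwise `s < m` at some time. At points of `γ` with `s < m` one has
`s_x ≥ 0`, since otherwise the value of `s` would be carried from the circle `t = t₀`. As
`s' = -2c s_x` along `γ`, from some time `t₁` with `s_x > 0` on, `s` decreases along `γ`, so `q(u)`
and `c` are bounded below there. The `s`-characteristic `δ` issued from `γ` at `t₁` is trapped and
moves away from `γ` with speed at least a positive constant, so it meets the translate `γ + 1` at
some time `t₂ > t₁`. There `s` equals its value at `t₁` although it has strictly decreased along
`γ`, a contradiction. No growth assumption on `p`, `u` or `v` is needed.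

Applying this to the four reflected solutions yields `r_x = s_x = 0` in the hyperbolic region, so
`u` and `v` are locally constant there; a level set `{u = u₀}` with `u₀ < 0` is then open and
closed.
-/

/-- `q(w) = ∫_w^0 √(-p'(s)) ds`. -/
noncomputable def qfun (p : ℝ → ℝ) (w : ℝ) : ℝ :=
  ∫ s in w..(0:ℝ), Real.sqrt (-(deriv p s))

/-- `(u, v)` solves the p-system `u_t = -v_x`, `v_t = (p(u))_x` on the domain `D`. -/
def PSystem (p : ℝ → ℝ) (u v : ℝ × ℝ → ℝ) (D : Set (ℝ × ℝ)) : Prop :=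
  ∀ z ∈ D,
    deriv (fun s => u (s, z.2)) z.1 = -deriv (fun y => v (z.1, y)) z.2 ∧
    deriv (fun s => v (s, z.2)) z.1 = deriv (fun y => p (u (z.1, y))) z.2

namespace PSys

open Set Filter Topology

/-- The characteristic speed `c(w) = √(-p'(w))`; it vanishes for `w ≥ 0`, where `p' ≥ 0`. -/
noncomputable def cs (p : ℝ → ℝ) (w : ℝ) : ℝ := Real.sqrt (-(deriv p w))

/-- Partial derivative in `t`. -/
noncomputable def dt (f : ℝ × ℝ → ℝ) (z : ℝ × ℝ) : ℝ := fderiv ℝ f z (1, 0)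

/-- Partial derivative in `x`. -/
noncomputable def dx (f : ℝ × ℝ → ℝ) (z : ℝ × ℝ) : ℝ := fderiv ℝ f z (0, 1)

/-- The standing assumptions: a `C²` solution of the p-system on the cylinder, with the equations
written through partial derivatives and `(p(u))_x` expanded. -/
structure Sol (p : ℝ → ℝ) (u v : ℝ × ℝ → ℝ) : Prop where
  hp : ContDiff ℝ 2 p
  hconv : ∀ w : ℝ, 0 < deriv (deriv p) w
  hp'0 : deriv p 0 = 0
  hu : ContDiff ℝ 2 u
  hv : ContDiff ℝ 2 v
  sys1 : ∀ z, dt u z = - dx v z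
  sys2 : ∀ z, dt v z = deriv p (u z) * dx u z
  uper : ∀ t x : ℝ, u (t, x + 1) = u (t, x)
  vper : ∀ t x : ℝ, v (t, x + 1) = v (t, x)

/-- The Riemann invariant `r = v + q(u)`. -/
noncomputable def rI (p : ℝ → ℝ) (u v : ℝ × ℝ → ℝ) (z : ℝ × ℝ) : ℝ := v z + qfun p (u z)

/-- The Riemann invariant `s = v - q(u)`. -/
noncomputable def sI (p : ℝ → ℝ) (u v : ℝ × ℝ → ℝ) (z : ℝ × ℝ) : ℝ := v z - qfun p (u z)

/-- The `x`-derivative of `r = v + q(u)`, written out using `q' = -c`. -/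
noncomputable def rx (p : ℝ → ℝ) (u v : ℝ × ℝ → ℝ) (z : ℝ × ℝ) : ℝ := dx v z - cs p (u z) * dx u z

/-- The `x`-derivative of `s = v - q(u)`, written out using `q' = -c`. -/
noncomputable def sx (p : ℝ → ℝ) (u v : ℝ × ℝ → ℝ) (z : ℝ × ℝ) : ℝ := dx v z + cs p (u z) * dx u z

/-- The weighted gradient `R = √c · r_x`, which satisfies a pure Riccati equation along
`r`-characteristics. -/
noncomputable def Rw (p : ℝ → ℝ) (u v : ℝ × ℝ → ℝ) (z : ℝ × ℝ) : ℝ :=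
  Real.sqrt (cs p (u z)) * rx p u v z

/-! ### Real-variable lemmas -/

/-- A function that starts at height at least `m` and ends below `m` is strictly decreasing
somewhere below `m`. -/
lemma exists_neg_deriv_below {f f' : ℝ → ℝ} {a b m : ℝ} (hab : a ≤ b)
    (hf : ∀ t ∈ Icc a b, HasDerivAt f (f' t) t) (ha : m ≤ f a) (hb : f b < m) :
    ∃ t ∈ Icc a b, f t < m ∧ f' t < 0 := by
  have hc : ContinuousOn f (Icc a b) := fun t ht => (hf t ht).continuousAt.continuousWithinAt
  have hcl : IsCompact (Icc a b ∩ f ⁻¹' Ici m) :=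
    isCompact_Icc.of_isClosed_subset (hc.preimage_isClosed_of_isClosed isClosed_Icc isClosed_Ici)
      inter_subset_left
  obtain ⟨τ, ⟨hτ, hτm⟩, hmax⟩ := hcl.exists_isGreatest ⟨a, ⟨le_rfl, hab⟩, ha⟩
  have hτm' : m ≤ f τ := hτm
  have hlt : τ < b := lt_of_le_of_ne hτ.2 (by rintro rfl; linarith)
  obtain ⟨c, hcm, hce⟩ := exists_hasDerivAt_eq_slope f f' hlt
    (hc.mono (Icc_subset_Icc_left hτ.1)) (fun x hx => hf x ⟨hτ.1.trans hx.1.le, hx.2.le⟩)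
  have hcI : c ∈ Icc a b := ⟨hτ.1.trans hcm.1.le, hcm.2.le⟩
  refine ⟨c, hcI, ?_, ?_⟩
  · by_contra h
    exact absurd (hmax ⟨hcI, not_lt.1 h⟩) (not_le.2 hcm.1)
  · rw [hce]
    exact div_neg_of_neg_of_pos (by linarith) (by linarith)

lemma antitoneOn_of_hasDerivAt {f f' : ℝ → ℝ} {a b : ℝ}
    (hf : ∀ t ∈ Icc a b, HasDerivAt f (f' t) t) (h : ∀ t ∈ Ioo a b, f' t ≤ 0) :
    AntitoneOn f (Icc a b) := by
  refine antitoneOn_of_deriv_nonpos (convex_Icc a b)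
    (fun t ht => (hf t ht).continuousAt.continuousWithinAt)
    (fun t ht => (hf t (interior_subset ht)).differentiableAt.differentiableWithinAt) ?_
  intro t ht
  rw [(hf t (interior_subset ht)).deriv]
  rw [interior_Icc] at ht
  exact h t ht

lemma monotoneOn_of_hasDerivAt {f f' : ℝ → ℝ} {a b : ℝ} (hc : ContinuousOn f (Icc a b))
    (hf : ∀ t ∈ Ioo a b, HasDerivAt f (f' t) t) (h : ∀ t ∈ Ioo a b, 0 ≤ f' t) :
    MonotoneOn f (Icc a b) := by
  refine monotoneOn_of_deriv_nonneg (convex_Icc a b) hc ?_ ?_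
  · rw [interior_Icc]
    exact fun t ht => (hf t ht).differentiableAt.differentiableWithinAt
  · rw [interior_Icc]
    intro t ht
    rw [(hf t ht).deriv]
    exact h t ht

/-- If `f` cannot increase while below `m`, then once below `m` it stays there and is antitone. -/
lemma antitoneOn_below {f f' : ℝ → ℝ} {a b m : ℝ}
    (hf : ∀ t ∈ Icc a b, HasDerivAt f (f' t) t) (ha : f a < m)
    (h : ∀ t ∈ Icc a b, f t < m → f' t ≤ 0) :
    AntitoneOn f (Icc a b) ∧ ∀ t ∈ Icc a b, f t < m := by
  have hc : ContinuousOn f (Icc a b) := fun t ht => (hf t ht).continuousAt.continuousWithinAt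
  have key : ∀ t ∈ Icc a b, f t < m := by
    by_contra! hne
    obtain ⟨t, ht, htm⟩ := hne
    have hcl : IsCompact (Icc a b ∩ f ⁻¹' Ici m) :=
      isCompact_Icc.of_isClosed_subset
        (hc.preimage_isClosed_of_isClosed isClosed_Icc isClosed_Ici) inter_subset_left
    obtain ⟨τ, ⟨hτ, hτm⟩, hmin⟩ := hcl.exists_isLeast ⟨t, ht, htm⟩
    have hτm' : m ≤ f τ := hτm
    have hanti : AntitoneOn f (Icc a τ) := by
      refine antitoneOn_of_hasDerivAt (fun s hs => hf s ⟨hs.1, hs.2.trans hτ.2⟩) ?_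
      intro s hs
      have hsI : s ∈ Icc a b := ⟨hs.1.le, hs.2.le.trans hτ.2⟩
      refine h s hsI ?_
      by_contra hh
      exact absurd (hmin ⟨hsI, not_lt.1 hh⟩) (not_le.2 hs.2)
    have := hanti ⟨le_rfl, hτ.1⟩ ⟨hτ.1, le_rfl⟩ hτ.1
    linarith
  exact ⟨antitoneOn_of_hasDerivAt hf (fun t ht =>
    h t (Ioo_subset_Icc_self ht) (key t (Ioo_subset_Icc_self ht))), key⟩

/-- A continuous function that is 1-periodic in `x` is bounded on compact time intervals. -/
lemma bounded_of_periodic {f : ℝ × ℝ → ℝ} (hf : Continuous f)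
    (hper : ∀ t x, f (t, x + 1) = f (t, x)) (a b : ℝ) :
    ∃ M > 0, ∀ t ∈ Icc a b, ∀ x, |f (t, x)| ≤ M := by
  obtain ⟨M, hM⟩ := ((isCompact_Icc (a := a) (b := b)).prod
    (isCompact_Icc (a := (0:ℝ)) (b := 1))).exists_bound_of_continuousOn hf.continuousOn
  refine ⟨|M| + 1, by positivity, fun t ht x => ?_⟩
  have hP : Function.Periodic (fun y => f (t, y)) 1 := fun y => hper t y
  have h1 : f (t, x) = f (t, Int.fract x) := by
    have := hP.sub_int_mul_eq ⌊x⌋ (x := x)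
    simp only [mul_one] at this
    rw [← this]; rfl
  rw [h1]
  have := hM (t, Int.fract x) ⟨ht, (Int.fract_nonneg x), (Int.fract_lt_one x).le⟩
  rw [Real.norm_eq_abs] at this
  linarith [le_abs_self M]

/-- Global existence on compact time intervals for the scalar equation `x' = F(t, x)` with a
bounded, uniformly Lipschitz field. -/
lemma exists_solution {F : ℝ → ℝ → ℝ} {a b t0 x0 K L : ℝ} (hK : 0 ≤ K) (hL : 0 ≤ L)
    (ht0 : t0 ∈ Icc a b) (hF : Continuous (fun z : ℝ × ℝ => F z.1 z.2))
    (hlip : ∀ t ∈ Icc a b, ∀ x y, |F t x - F t y| ≤ K * |x - y|)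
    (hbd : ∀ t ∈ Icc a b, ∀ x, |F t x| ≤ L) :
    ∃ γ : ℝ → ℝ, γ t0 = x0 ∧ ∀ t ∈ Ioo a b, HasDerivAt γ (F t (γ t)) t := by
  have hA : 0 ≤ L * max (b - t0) (t0 - a) :=
    mul_nonneg hL (le_max_of_le_left (by linarith [ht0.2]))
  have hpl : IsPicardLindelof F (tmin := a) (tmax := b) ⟨t0, ht0⟩ x0
      ⟨L * max (b - t0) (t0 - a), hA⟩ 0 ⟨L, hL⟩ ⟨K, hK⟩ := by
    constructor
    · intro t ht
      refine LipschitzWith.lipschitzOnWith (LipschitzWith.of_dist_le_mul fun x y => ?_)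
      exact hlip t ht x y
    · intro x _
      exact (hF.comp (by fun_prop : Continuous fun t : ℝ => (t, x))).continuousOn
    · intro t ht x _
      exact hbd t ht x
    · rw [NNReal.coe_zero, sub_zero]
      exact le_rfl
  obtain ⟨γ, h0, hγ⟩ := hpl.exists_eq_forall_mem_Icc_hasDerivWithinAt₀
  exact ⟨γ, h0, fun t ht => (hγ t (Ioo_subset_Icc_self ht)).hasDerivAt (Icc_mem_nhds ht.1 ht.2)⟩

/-- The chain rule along a curve `t ↦ (t, γ t)`. -/
lemma hasDerivAt_along {f : ℝ × ℝ → ℝ} {γ : ℝ → ℝ} {g t : ℝ}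
    (hf : DifferentiableAt ℝ f (t, γ t)) (hγ : HasDerivAt γ g t) :
    HasDerivAt (fun s => f (s, γ s)) (dt f (t, γ t) + g * dx f (t, γ t)) t := by
  have h1 : HasDerivAt (fun s => (s, γ s)) ((1 : ℝ), g) t := (hasDerivAt_id t).prodMk hγ
  have h2 := hf.hasFDerivAt.comp_hasDerivAt t h1
  refine h2.congr_deriv ?_
  have : ((1 : ℝ), g) = (1, 0) + g • ((0 : ℝ), (1 : ℝ)) := by simp
  rw [this, map_add, map_smul]; rfl

/-! ### The speed `c` and the potential `q` -/

section
variable {p : ℝ → ℝ} {u v : ℝ × ℝ → ℝ}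

lemma Sol.contDiff_deriv (h : Sol p u v) : ContDiff ℝ 1 (deriv p) :=
  ((contDiff_succ_iff_deriv (n := 1)).1 (by simpa [one_add_one_eq_two] using h.hp)).2.2

lemma Sol.strictMono (h : Sol p u v) : StrictMono (deriv p) :=
  strictMono_of_deriv_pos h.hconv

lemma Sol.hasDerivAt_deriv (h : Sol p u v) (w : ℝ) :
    HasDerivAt (deriv p) (deriv (deriv p) w) w :=
  (h.contDiff_deriv.differentiable (by norm_num) w).hasDerivAt

lemma Sol.continuous_deriv2 (h : Sol p u v) : Continuous (deriv (deriv p)) :=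
  h.contDiff_deriv.continuous_deriv (by norm_num)

lemma Sol.cs_continuous (h : Sol p u v) : Continuous (cs p) :=
  (h.contDiff_deriv.continuous.neg).sqrt

lemma cs_nonneg (w : ℝ) : 0 ≤ cs p w := Real.sqrt_nonneg _

lemma Sol.deriv_neg (h : Sol p u v) {w : ℝ} (hw : w < 0) : deriv p w < 0 := by
  have := h.strictMono hw
  rwa [h.hp'0] at this

lemma Sol.cs_pos (h : Sol p u v) {w : ℝ} (hw : w < 0) : 0 < cs p w :=
  Real.sqrt_pos.2 (by linarith [h.deriv_neg hw])

lemma Sol.cs_antitone (h : Sol p u v) : Antitone (cs p) := fun _ _ hab =>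
  Real.sqrt_le_sqrt (neg_le_neg (h.strictMono.monotone hab))

lemma Sol.cs_eq_zero (h : Sol p u v) {w : ℝ} (hw : 0 ≤ w) : cs p w = 0 := by
  refine Real.sqrt_eq_zero_of_nonpos ?_
  have := h.strictMono.monotone hw
  rw [h.hp'0] at this
  linarith

lemma Sol.neg_of_cs_pos (h : Sol p u v) {w : ℝ} (hw : 0 < cs p w) : w < 0 := by
  by_contra hn
  rw [h.cs_eq_zero (not_lt.1 hn)] at hw
  exact lt_irrefl _ hw

lemma Sol.cs_sq (h : Sol p u v) {w : ℝ} (hw : w < 0) : deriv p w = -(cs p w) ^ 2 := by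
  rw [cs, Real.sq_sqrt (by linarith [h.deriv_neg hw])]; ring

lemma Sol.hasDerivAt_cs (h : Sol p u v) {w : ℝ} (hw : w < 0) :
    HasDerivAt (cs p) (-(deriv (deriv p) w) / (2 * cs p w)) w :=
  (h.hasDerivAt_deriv w).neg.sqrt (by have := h.deriv_neg hw; simpa using this.ne)

lemma Sol.hasDerivAt_q (h : Sol p u v) (w : ℝ) : HasDerivAt (qfun p) (-(cs p w)) w :=
  intervalIntegral.integral_hasDerivAt_left (h.cs_continuous.intervalIntegrable _ _)
    (h.cs_continuous.stronglyMeasurableAtFilter _ _) h.cs_continuous.continuousAt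

lemma Sol.q_continuous (h : Sol p u v) : Continuous (qfun p) :=
  continuous_iff_continuousAt.2 fun w => (h.hasDerivAt_q w).continuousAt

lemma Sol.q_antitone (h : Sol p u v) : Antitone (qfun p) := by
  refine antitone_of_deriv_nonpos (fun w => (h.hasDerivAt_q w).differentiableAt) fun w => ?_
  rw [(h.hasDerivAt_q w).deriv]
  linarith [cs_nonneg (p := p) w]

/-- `q` is unbounded at `-∞`, since its slope there is at most `-c(-1) < 0`. -/
lemma Sol.exists_q_gt (h : Sol p u v) (B : ℝ) : ∃ K > 0, B < qfun p (-K) := by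
  set c1 := cs p (-1) with hc1
  have hc1p : 0 < c1 := h.cs_pos (by norm_num)
  have key : ∀ L, 0 ≤ L → qfun p (-1) + c1 * L ≤ qfun p (-1 - L) := by
    intro L hL
    have hanti : AntitoneOn (fun w => qfun p w + c1 * w) (Icc (-1 - L) (-1)) := by
      refine antitoneOn_of_hasDerivAt (f' := fun w => -(cs p w) + c1 * 1)
        (fun w _ => (h.hasDerivAt_q w).add ((hasDerivAt_id w).const_mul c1)) ?_
      intro w hw
      have := h.cs_antitone hw.2.le
      rw [← hc1] at this
      linarith
    have := hanti (a := -1 - L) ⟨le_rfl, by linarith⟩ (b := -1) ⟨by linarith, le_rfl⟩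
      (by linarith)
    simp only at this
    linarith
  refine ⟨1 + (|B - qfun p (-1)| + 1) / c1, by positivity, ?_⟩
  have := key ((|B - qfun p (-1)| + 1) / c1) (by positivity)
  rw [mul_div_cancel₀ _ hc1p.ne'] at this
  have h2 := le_abs_self (B - qfun p (-1))
  rw [show -(1 + (|B - qfun p (-1)| + 1) / c1) = -1 - (|B - qfun p (-1)| + 1) / c1 by ring]
  linarith

/-! ### Regularity and periodicity of the derivatives -/

lemma contDiff_dt {f : ℝ × ℝ → ℝ} (hf : ContDiff ℝ 2 f) : ContDiff ℝ 1 (dt f) :=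
  (hf.fderiv_right (m := 1) (by norm_num [one_add_one_eq_two])).clm_apply contDiff_const

lemma contDiff_dx {f : ℝ × ℝ → ℝ} (hf : ContDiff ℝ 2 f) : ContDiff ℝ 1 (dx f) :=
  (hf.fderiv_right (m := 1) (by norm_num [one_add_one_eq_two])).clm_apply contDiff_const

/-- Equality of mixed partial derivatives. -/
lemma dt_dx {f : ℝ × ℝ → ℝ} (hf : ContDiff ℝ 2 f) (z : ℝ × ℝ) : dt (dx f) z = dx (dt f) z := by
  have hd : DifferentiableAt ℝ (fderiv ℝ f) z :=
    (hf.fderiv_right (m := 1) (by norm_num [one_add_one_eq_two])).differentiable (by norm_num) z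
  have hs : IsSymmSndFDerivAt ℝ f z := hf.contDiffAt.isSymmSndFDerivAt (by simp)
  have e : ∀ a b : ℝ × ℝ, fderiv ℝ (fun y => fderiv ℝ f y a) z b
      = fderiv ℝ (fderiv ℝ f) z b a := by
    intro a b
    rw [fderiv_clm_apply hd (differentiableAt_const a)]
    simp
  change fderiv ℝ (fun y => fderiv ℝ f y (0, 1)) z (1, 0)
    = fderiv ℝ (fun y => fderiv ℝ f y (1, 0)) z (0, 1)
  rw [e, e]
  exact hs _ _

lemma dx_periodic {f : ℝ × ℝ → ℝ} (hper : ∀ t x, f (t, x + 1) = f (t, x)) (t x : ℝ) :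
    dx f (t, x + 1) = dx f (t, x) := by
  have h1 : (fun z : ℝ × ℝ => f (z + (0, 1))) = f := by
    funext ⟨a, b⟩
    simpa using hper a b
  have h2 : fderiv ℝ (fun z : ℝ × ℝ => f (z + (0, 1))) (t, x) = fderiv ℝ f ((t, x) + (0, 1)) :=
    fderiv_comp_add_right _
  rw [h1] at h2
  simp only [dx, h2]
  simp

lemma Sol.rx_continuous (h : Sol p u v) : Continuous (rx p u v) :=
  (contDiff_dx h.hv).continuous.sub
    ((h.cs_continuous.comp h.hu.continuous).mul (contDiff_dx h.hu).continuous)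

lemma Sol.rx_periodic (h : Sol p u v) (t x : ℝ) : rx p u v (t, x + 1) = rx p u v (t, x) := by
  simp only [rx, dx_periodic h.uper, dx_periodic h.vper, h.uper]

lemma Sol.sI_continuous (h : Sol p u v) : Continuous (sI p u v) :=
  h.hv.continuous.sub (h.q_continuous.comp h.hu.continuous)

lemma Sol.sI_periodic (h : Sol p u v) (t x : ℝ) : sI p u v (t, x + 1) = sI p u v (t, x) := by
  simp only [sI, h.uper, h.vper]

lemma Sol.u_diff (h : Sol p u v) : Differentiable ℝ u := h.hu.differentiable (by norm_num)

lemma Sol.v_diff (h : Sol p u v) : Differentiable ℝ v := h.hv.differentiable (by norm_num)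

/-! ### Evolution along characteristics -/

/-- `r` is constant along `r`-characteristics `γ' = -c`. -/
lemma Sol.hasDerivAt_rI (h : Sol p u v) {γ : ℝ → ℝ} {t : ℝ} (hneg : u (t, γ t) < 0)
    (hγ : HasDerivAt γ (-(cs p (u (t, γ t)))) t) :
    HasDerivAt (fun s => rI p u v (s, γ s)) 0 t := by
  have h1 := hasDerivAt_along (h.v_diff _) hγ
  have h2 := hasDerivAt_along (h.u_diff _) hγ
  refine (h1.add ((h.hasDerivAt_q _).comp t h2)).congr_deriv ?_
  rw [h.sys1, h.sys2, h.cs_sq hneg]; ring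

/-- Along an `r`-characteristic, `s` changes at rate `-2c s_x`. -/
lemma Sol.hasDerivAt_sI (h : Sol p u v) {γ : ℝ → ℝ} {t : ℝ} (hneg : u (t, γ t) < 0)
    (hγ : HasDerivAt γ (-(cs p (u (t, γ t)))) t) :
    HasDerivAt (fun s => sI p u v (s, γ s))
      (-2 * cs p (u (t, γ t)) * sx p u v (t, γ t)) t := by
  have h1 := hasDerivAt_along (h.v_diff _) hγ
  have h2 := hasDerivAt_along (h.u_diff _) hγ
  refine (h1.sub ((h.hasDerivAt_q _).comp t h2)).congr_deriv ?_
  rw [h.sys1, h.sys2, h.cs_sq hneg, sx]; ring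

/-- `s` is constant along `s`-characteristics `δ' = c`. -/
lemma Sol.hasDerivAt_sI' (h : Sol p u v) {γ : ℝ → ℝ} {t : ℝ} (hneg : u (t, γ t) < 0)
    (hγ : HasDerivAt γ (cs p (u (t, γ t))) t) :
    HasDerivAt (fun s => sI p u v (s, γ s)) 0 t := by
  have h1 := hasDerivAt_along (h.v_diff _) hγ
  have h2 := hasDerivAt_along (h.u_diff _) hγ
  refine (h1.sub ((h.hasDerivAt_q _).comp t h2)).congr_deriv ?_
  rw [h.sys1, h.sys2, h.cs_sq hneg]; ring

lemma Sol.dx_dt_v (h : Sol p u v) (z : ℝ × ℝ) :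
    dx (dt v) z = deriv (deriv p) (u z) * dx u z ^ 2 + deriv p (u z) * dx (dx u) z := by
  have e : dt v = fun z => deriv p (u z) * dx u z := funext h.sys2
  have h1 : HasFDerivAt (fun z => deriv p (u z)) (deriv (deriv p) (u z) • fderiv ℝ u z) z :=
    (h.hasDerivAt_deriv (u z)).comp_hasFDerivAt z (h.u_diff z).hasFDerivAt
  have h2 : HasFDerivAt (dx u) (fderiv ℝ (dx u) z) z :=
    ((contDiff_dx h.hu).differentiable (by norm_num) z).hasFDerivAt
  have h3 := (h1.mul h2).fderiv
  have h4 : dx (dt v) z = fderiv ℝ (fun z => deriv p (u z) * dx u z) z (0, 1) := by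
    rw [dx, e]
  rw [h4]
  erw [h3]
  simp only [add_apply, FunLike.coe_smul, Pi.smul_apply, smul_eq_mul]
  simp only [dx]; ring

lemma Sol.dx_dt_u (h : Sol p u v) (z : ℝ × ℝ) : dx (dt u) z = - dx (dx v) z := by
  have e : dt u = fun z => - dx v z := funext h.sys1
  have h4 : dx (dt u) z = fderiv ℝ (fun z => - dx v z) z (0, 1) := by
    rw [dx, e]
  rw [h4]
  rw [fderiv_fun_neg]
  rfl

/-- Lax's Riccati equation `R' = p'' / (4 c² √c) · R²` along `r`-characteristics. -/
lemma Sol.hasDerivAt_Rw (h : Sol p u v) {γ : ℝ → ℝ} {t : ℝ} (hneg : u (t, γ t) < 0)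
    (hγ : HasDerivAt γ (-(cs p (u (t, γ t)))) t) :
    HasDerivAt (fun s => Rw p u v (s, γ s))
      (deriv (deriv p) (u (t, γ t)) /
        (4 * cs p (u (t, γ t)) ^ 2 * Real.sqrt (cs p (u (t, γ t)))) * Rw p u v (t, γ t) ^ 2) t := by
  have hu' := hasDerivAt_along (h.u_diff _) hγ
  have hvx := hasDerivAt_along ((contDiff_dx h.hv).differentiable (by norm_num) _) hγ
  have hux := hasDerivAt_along ((contDiff_dx h.hu).differentiable (by norm_num) _) hγ
  have hcp := h.cs_pos hneg
  have hc := HasDerivAt.comp t (h.hasDerivAt_cs hneg) hu'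
  have hsq := hc.sqrt hcp.ne'
  have hR := hsq.mul (hvx.sub (hc.mul hux))
  refine hR.congr_deriv ?_
  simp only [Function.comp_apply, Rw, rx, Pi.sub_apply, Pi.mul_apply]
  rw [dt_dx h.hu, dt_dx h.hv, h.dx_dt_v, h.dx_dt_u, h.sys1, h.cs_sq hneg]
  clear hR hsq hc hux hvx hu' hγ
  generalize cs p (u (t, γ t)) = c at *
  have hs : 0 < Real.sqrt c := Real.sqrt_pos.2 hcp
  have hs2 : c = Real.sqrt c ^ 2 := (Real.sq_sqrt hcp.le).symm
  generalize Real.sqrt c = σ at *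
  subst hs2
  field_simp
  ring

end

section
variable {p : ℝ → ℝ} {u v : ℝ × ℝ → ℝ}

/-! ### Existence of characteristics -/

lemma abs_sqrt_max_sub_le {ε a b : ℝ} (hε : 0 < ε) :
    |Real.sqrt (max a (ε ^ 2)) - Real.sqrt (max b (ε ^ 2))| ≤ 1 / (2 * ε) * |a - b| := by
  set A := Real.sqrt (max a (ε ^ 2)) with hA
  set B := Real.sqrt (max b (ε ^ 2)) with hB
  have hA1 : ε ≤ A := Real.le_sqrt_of_sq_le (le_max_right _ _)
  have hB1 : ε ≤ B := Real.le_sqrt_of_sq_le (le_max_right _ _)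
  have hA2 : A ^ 2 = max a (ε ^ 2) := Real.sq_sqrt (le_max_of_le_right (by positivity))
  have hB2 : B ^ 2 = max b (ε ^ 2) := Real.sq_sqrt (le_max_of_le_right (by positivity))
  have h1 : |A ^ 2 - B ^ 2| ≤ |a - b| := by
    rw [hA2, hB2]; exact abs_max_sub_max_le_abs _ _ _
  have h2 : |A ^ 2 - B ^ 2| = (A + B) * |A - B| := by
    rw [show A ^ 2 - B ^ 2 = (A + B) * (A - B) by ring, abs_mul, abs_of_pos (by linarith)]
  have h3 : 2 * ε * |A - B| ≤ (A + B) * |A - B| :=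
    mul_le_mul_of_nonneg_right (by linarith) (abs_nonneg _)
  rw [one_div, inv_mul_eq_div, le_div_iff₀ (by positivity)]
  linarith

/-- Characteristics of the regularised field `-max(c, ε)`, which is bounded and Lipschitz in `x`
on compact time intervals (the speed `c` itself is not Lipschitz where `u = 0`). -/
lemma Sol.exists_regularised (h : Sol p u v) {ε : ℝ} (hε : 0 < ε) (t0 x0 T : ℝ) (hT : t0 ≤ T) :
    ∃ γ : ℝ → ℝ, γ t0 = x0 ∧ ∀ t ∈ Icc t0 T,
      HasDerivAt γ (-(Real.sqrt (max (-(deriv p (u (t, γ t)))) (ε ^ 2)))) t := by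
  set w : ℝ × ℝ → ℝ := fun z => -(deriv p (u z)) with hw
  have hwC : ContDiff ℝ 1 w := (h.contDiff_deriv.comp (h.hu.of_le (by norm_num))).neg
  have hwper : ∀ t x, w (t, x + 1) = w (t, x) := fun t x => by simp only [hw, h.uper]
  have hwx : Continuous (dx w) := (hwC.continuous_fderiv (by norm_num)).clm_apply continuous_const
  obtain ⟨M, hM0, hM⟩ := bounded_of_periodic hwx (dx_periodic hwper) (t0 - 1) (T + 1)
  have hFc : Continuous fun z : ℝ × ℝ => -(Real.sqrt (max (w z) (ε ^ 2))) :=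
    ((hwC.continuous.max continuous_const).sqrt).neg
  obtain ⟨L, hL0, hL⟩ := bounded_of_periodic hFc (fun t x => by simp only [hwper])
    (t0 - 1) (T + 1)
  obtain ⟨γ, h0, hγ⟩ := exists_solution (F := fun t x => -(Real.sqrt (max (w (t, x)) (ε ^ 2))))
    (a := t0 - 1) (b := T + 1) (t0 := t0) (x0 := x0) (K := 1 / (2 * ε) * M) (L := L)
    (by positivity) hL0.le ⟨by linarith, by linarith⟩ hFc (by
      intro t ht x y
      have h1 : |w (t, x) - w (t, y)| ≤ M * |x - y| := by
        have hd : ∀ y ∈ (univ : Set ℝ),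
            HasDerivWithinAt (fun y => w (t, y)) (dx w (t, y)) univ y := by
          intro y _
          have h1 : HasDerivAt (fun s : ℝ => (t, s)) ((0 : ℝ), (1 : ℝ)) y :=
            (hasDerivAt_const y t).prodMk (hasDerivAt_id y)
          exact ((hwC.differentiable (by norm_num) (t, y)).hasFDerivAt.comp_hasDerivAt y
            h1).hasDerivWithinAt
        exact convex_univ.norm_image_sub_le_of_norm_hasDerivWithin_le hd
          (fun y _ => hM t ht y) (mem_univ y) (mem_univ x)
      have h2 := abs_sqrt_max_sub_le (a := w (t, y)) (b := w (t, x)) hε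
      rw [abs_sub_comm (w (t, y))] at h2
      rw [show -(Real.sqrt (max (w (t, x)) (ε ^ 2))) - -(Real.sqrt (max (w (t, y)) (ε ^ 2)))
        = Real.sqrt (max (w (t, y)) (ε ^ 2)) - Real.sqrt (max (w (t, x)) (ε ^ 2)) by ring]
      calc _ ≤ _ := h2
        _ ≤ 1 / (2 * ε) * (M * |x - y|) := by gcongr
        _ = _ := by ring) (fun t ht x => hL t ht x)
  exact ⟨γ, h0, fun t ht => hγ t ⟨by linarith [ht.1], by linarith [ht.2]⟩⟩

lemma Sol.Rw_continuous (h : Sol p u v) : Continuous (Rw p u v) :=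
  (h.cs_continuous.comp h.hu.continuous).sqrt.mul h.rx_continuous

/-- `R` is nondecreasing along `r`-characteristics inside the hyperbolic region. -/
lemma Sol.Rw_mono (h : Sol p u v) {γ : ℝ → ℝ} {a b : ℝ}
    (hc : ContinuousOn γ (Icc a b))
    (hγ : ∀ t ∈ Ioo a b, u (t, γ t) < 0 ∧ HasDerivAt γ (-(cs p (u (t, γ t)))) t) :
    MonotoneOn (fun t => Rw p u v (t, γ t)) (Icc a b) := by
  refine monotoneOn_of_hasDerivAt ?_ (fun t ht => h.hasDerivAt_Rw (hγ t ht).1 (hγ t ht).2) ?_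
  · exact h.Rw_continuous.comp_continuousOn (continuousOn_id.prodMk hc)
  · intro t ht
    have := h.hconv (u (t, γ t))
    have := cs_nonneg (p := p) (u (t, γ t))
    positivity

/-- An `r`-characteristic issued from a hyperbolic point with `r_x > 0` exists for all later times
and never leaves the hyperbolic region: `R = √c · r_x` does not decrease along it, whereas `R`
would tend to `0` at the boundary `c = 0` because `r_x` stays bounded. -/
lemma Sol.exists_char (h : Sol p u v) {t0 x0 T : ℝ} (hT : t0 ≤ T) (hneg : u (t0, x0) < 0)
    (hrx : 0 < rx p u v (t0, x0)) :
    ∃ γ : ℝ → ℝ, γ t0 = x0 ∧ ∀ t ∈ Icc t0 T,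
      u (t, γ t) < 0 ∧ HasDerivAt γ (-(cs p (u (t, γ t)))) t := by
  obtain ⟨M, hM0, hM⟩ := bounded_of_periodic h.rx_continuous h.rx_periodic t0 T
  set R0 := Rw p u v (t0, x0) with hR0
  have hR0p : 0 < R0 := mul_pos (Real.sqrt_pos.2 (h.cs_pos hneg)) hrx
  set η := (R0 / M) ^ 2 with hη
  have hηp : 0 < η := by positivity
  -- a lower bound for `R` forces a lower bound for the speed
  have low : ∀ t ∈ Icc t0 T, ∀ x, R0 ≤ Rw p u v (t, x) → η ≤ cs p (u (t, x)) := by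
    intro t ht x hx
    have h1 : Rw p u v (t, x) ≤ Real.sqrt (cs p (u (t, x))) * M :=
      mul_le_mul_of_nonneg_left ((le_abs_self _).trans (hM t ht x)) (Real.sqrt_nonneg _)
    have h2 : R0 / M ≤ Real.sqrt (cs p (u (t, x))) := by
      rw [div_le_iff₀ hM0]; linarith
    calc η ≤ Real.sqrt (cs p (u (t, x))) ^ 2 := by rw [hη]; gcongr
      _ = _ := Real.sq_sqrt (cs_nonneg _)
  set ε := η / 2 with hε
  have hεp : 0 < ε := by positivity
  obtain ⟨γ, h0, hγ⟩ := h.exists_regularised hεp t0 x0 T hT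
  have hγc : ContinuousOn γ (Icc t0 T) :=
    fun t ht => (hγ t ht).continuousAt.continuousWithinAt
  -- where the speed exceeds `ε` the regularisation is invisible
  have good : ∀ t ∈ Icc t0 T, ε < cs p (u (t, γ t)) →
      u (t, γ t) < 0 ∧ HasDerivAt γ (-(cs p (u (t, γ t)))) t := by
    intro t ht hlt
    have hn : u (t, γ t) < 0 := h.neg_of_cs_pos (hεp.trans hlt)
    refine ⟨hn, ?_⟩
    have h1 := hγ t ht
    rw [max_eq_left] at h1
    · exact h1
    · rw [h.cs_sq hn, neg_neg]
      exact pow_le_pow_left₀ hεp.le hlt.le 2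
  have all : ∀ t ∈ Icc t0 T, ε < cs p (u (t, γ t)) := by
    by_contra! hne
    obtain ⟨t, ht, hle⟩ := hne
    have hcc : ContinuousOn (fun t => cs p (u (t, γ t))) (Icc t0 T) :=
      (h.cs_continuous.comp h.hu.continuous).comp_continuousOn (continuousOn_id.prodMk hγc)
    have hcl : IsCompact (Icc t0 T ∩ (fun t => cs p (u (t, γ t))) ⁻¹' Iic ε) :=
      isCompact_Icc.of_isClosed_subset
        (hcc.preimage_isClosed_of_isClosed isClosed_Icc isClosed_Iic) inter_subset_left
    obtain ⟨τ, ⟨hτ, hτε⟩, hmin⟩ := hcl.exists_isLeast ⟨t, ht, hle⟩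
    have hτε' : cs p (u (τ, γ τ)) ≤ ε := hτε
    have hmono : MonotoneOn (fun t => Rw p u v (t, γ t)) (Icc t0 τ) := by
      refine h.Rw_mono (hγc.mono (Icc_subset_Icc_right hτ.2)) ?_
      intro s hs
      have hsI : s ∈ Icc t0 T := ⟨hs.1.le, hs.2.le.trans hτ.2⟩
      refine good s hsI ?_
      by_contra hh
      exact absurd (hmin ⟨hsI, not_lt.1 hh⟩) (not_le.2 hs.2)
    have h1 := hmono ⟨le_rfl, hτ.1⟩ ⟨hτ.1, le_rfl⟩ hτ.1
    simp only [h0] at h1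
    have h2 := low τ hτ _ h1
    linarith
  exact ⟨γ, h0, fun t ht => good t ht (all t ht)⟩

lemma eq_of_hasDerivAt_zero {f : ℝ → ℝ} {a b : ℝ} (hf : ∀ t ∈ Icc a b, HasDerivAt f 0 t)
    {t : ℝ} (ht : t ∈ Icc a b) : f t = f a :=
  constant_of_has_deriv_right_zero (fun t ht => (hf t ht).continuousAt.continuousWithinAt)
    (fun t ht => (hf t (Ico_subset_Icc_self ht)).hasDerivWithinAt) t ht

/-! ### Reflection symmetries -/

lemma partials_reflect {f : ℝ × ℝ → ℝ} (hf : Differentiable ℝ f) (σ τ κ : ℝ) (z : ℝ × ℝ) :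
    dt (fun z => κ * f (σ * z.1, τ * z.2)) z = κ * σ * dt f (σ * z.1, τ * z.2) ∧
    dx (fun z => κ * f (σ * z.1, τ * z.2)) z = κ * τ * dx f (σ * z.1, τ * z.2) := by
  have hL : HasFDerivAt (fun z : ℝ × ℝ => (σ * z.1, τ * z.2))
      ((σ • ContinuousLinearMap.fst ℝ ℝ ℝ).prod (τ • ContinuousLinearMap.snd ℝ ℝ ℝ)) z :=
    (hasFDerivAt_fst.const_mul σ).prodMk (hasFDerivAt_snd.const_mul τ)
  have h1 := (((hf (σ * z.1, τ * z.2)).hasFDerivAt.comp z hL).const_mul κ).fderiv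
  have e1 : fderiv ℝ (fun z => κ * f (σ * z.1, τ * z.2)) z = _ := h1
  have a1 : ((σ : ℝ), (0 : ℝ)) = σ • ((1 : ℝ), (0 : ℝ)) := by simp
  have a2 : ((0 : ℝ), (τ : ℝ)) = τ • ((0 : ℝ), (1 : ℝ)) := by simp
  constructor
  · rw [dt, e1, dt]
    simp
    rw [a1, map_smul, smul_eq_mul]; ring
  · rw [dx, e1, dx]
    simp
    rw [a2, map_smul, smul_eq_mul]; ring

lemma reflect_eq_one_mul {f : ℝ × ℝ → ℝ} (σ τ : ℝ) :
    (fun z : ℝ × ℝ => f (σ * z.1, τ * z.2)) = fun z => 1 * f (σ * z.1, τ * z.2) := by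
  simp

/-- The p-system is invariant under `(t, x, v) ↦ (σt, τx, στv)` with `σ, τ = ±1`. -/
lemma Sol.reflect (h : Sol p u v) {σ τ : ℝ} (hσ : σ = 1 ∨ σ = -1) (hτ : τ = 1 ∨ τ = -1) :
    Sol p (fun z => u (σ * z.1, τ * z.2)) (fun z => (σ * τ) * v (σ * z.1, τ * z.2)) where
  hp := h.hp
  hconv := h.hconv
  hp'0 := h.hp'0
  hu := h.hu.comp (by fun_prop)
  hv := contDiff_const.mul (h.hv.comp (by fun_prop))
  sys1 z := by
    rw [reflect_eq_one_mul, (partials_reflect h.u_diff σ τ 1 z).1,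
      (partials_reflect h.v_diff σ τ (σ * τ) z).2, h.sys1]
    rcases hτ with rfl | rfl <;> ring
  sys2 z := by
    rw [reflect_eq_one_mul (f := u), (partials_reflect h.u_diff σ τ 1 z).2,
      (partials_reflect h.v_diff σ τ (σ * τ) z).1, h.sys2]
    rcases hσ with rfl | rfl <;> ring_nf
  uper t x := by
    rcases hτ with rfl | rfl
    · simpa using h.uper (σ * t) x
    · have := h.uper (σ * t) (-(x + 1))
      simpa using this.symm
  vper t x := by
    rcases hτ with rfl | rfl
    · simp [h.vper (σ * t) x]
    · have := h.vper (σ * t) (-(x + 1))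
      simp at this
      simp [this]

lemma Sol.rx_reflect (h : Sol p u v) {σ τ : ℝ} (hτ : τ = 1 ∨ τ = -1) (z : ℝ × ℝ) :
    rx p (fun z => u (σ * z.1, τ * z.2)) (fun z => (σ * τ) * v (σ * z.1, τ * z.2)) z
      = σ * dx v (σ * z.1, τ * z.2)
        - τ * (cs p (u (σ * z.1, τ * z.2)) * dx u (σ * z.1, τ * z.2)) := by
  rw [rx, reflect_eq_one_mul (f := u), (partials_reflect h.u_diff σ τ 1 z).2,
    (partials_reflect h.v_diff σ τ (σ * τ) z).2]
  rcases hτ with rfl | rfl <;> ring_nf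

/-- Where `s_x > 0`, the forward `s`-characteristic stays in the hyperbolic region. -/
lemma Sol.exists_char_s (h : Sol p u v) {t0 x0 T : ℝ} (hT : t0 ≤ T) (hneg : u (t0, x0) < 0)
    (hsx : 0 < sx p u v (t0, x0)) :
    ∃ δ : ℝ → ℝ, δ t0 = x0 ∧ ∀ t ∈ Icc t0 T,
      u (t, δ t) < 0 ∧ HasDerivAt δ (cs p (u (t, δ t))) t := by
  have h' := h.reflect (σ := 1) (τ := -1) (Or.inl rfl) (Or.inr rfl)
  obtain ⟨γ, h0, hγ⟩ := h'.exists_char (t0 := t0) (x0 := -x0) hT (by simpa using hneg) (by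
    rw [h.rx_reflect (Or.inr rfl)]
    simpa [sx] using hsx)
  refine ⟨fun t => -γ t, by simp [h0], fun t ht => ?_⟩
  obtain ⟨h1, h2⟩ := hγ t ht
  simp only [one_mul, neg_one_mul] at h1 h2
  exact ⟨h1, h2.fun_neg.congr_deriv (neg_neg _)⟩

/-- Where `s_x < 0`, the backward `s`-characteristic stays in the hyperbolic region, so the value
of `s` is already attained at any earlier time. -/
lemma Sol.exists_past_s (h : Sol p u v) {t0 t1 x1 : ℝ} (hT : t0 ≤ t1) (hneg : u (t1, x1) < 0)
    (hsx : sx p u v (t1, x1) < 0) : ∃ y, sI p u v (t0, y) = sI p u v (t1, x1) := by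
  have h' := h.reflect (σ := -1) (τ := 1) (Or.inr rfl) (Or.inl rfl)
  obtain ⟨γ, h0, hγ⟩ := h'.exists_char (t0 := -t1) (x0 := x1) (T := -t0) (by linarith)
    (by simpa using hneg) (by
      rw [h.rx_reflect (Or.inl rfl)]
      simp [sx] at hsx ⊢
      linarith)
  have h2 := eq_of_hasDerivAt_zero (fun t ht => h'.hasDerivAt_rI (hγ t ht).1 (hγ t ht).2)
    (t := -t0) ⟨by linarith, le_rfl⟩
  refine ⟨γ (-t0), ?_⟩
  simp only [rI, h0] at h2
  simp only [sI]
  simp at h2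
  linarith

end

/-! ### Lax blow-up and the dichotomy -/

section
variable {p : ℝ → ℝ} {u v : ℝ × ℝ → ℝ}

/-- Riccati blow-up along an `r`-characteristic on which `s ≥ m`: in that case `q ≤ (r₀ - m)/2`,
hence `u` is bounded below and the Riccati coefficient is bounded away from `0`.  The time `τ`
depends on the initial point and `m` only. -/
lemma Sol.exists_s_lt (h : Sol p u v) {t0 x0 : ℝ} (hneg : u (t0, x0) < 0)
    (hrx : 0 < rx p u v (t0, x0)) (m : ℝ) :
    ∃ τ > 0, ∀ γ : ℝ → ℝ, γ t0 = x0 →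
      (∀ t ∈ Icc t0 (t0 + τ), u (t, γ t) < 0 ∧ HasDerivAt γ (-(cs p (u (t, γ t)))) t) →
      ∃ t ∈ Icc t0 (t0 + τ), sI p u v (t, γ t) < m := by
  set r0 := rI p u v (t0, x0) with hr0
  set R0 := Rw p u v (t0, x0) with hR0
  have hR0p : 0 < R0 := mul_pos (Real.sqrt_pos.2 (h.cs_pos hneg)) hrx
  obtain ⟨K, hK, hKq⟩ := h.exists_q_gt ((r0 - m) / 2)
  obtain ⟨w0, -, hw0⟩ := (isCompact_Icc (a := -K) (b := (0 : ℝ))).exists_isMinOn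
    ⟨0, by linarith, le_rfl⟩ h.continuous_deriv2.continuousOn
  set k := deriv (deriv p) w0 with hk
  have hkp : 0 < k := h.hconv w0
  set C := cs p (-K) with hC
  have hCp : 0 < C := h.cs_pos (by linarith)
  have hsC : 0 < Real.sqrt C := Real.sqrt_pos.2 hCp
  set α := k / (4 * C ^ 2 * Real.sqrt C) with hα
  have hαp : 0 < α := by positivity
  refine ⟨1 / (α * R0), by positivity, fun γ h0 hγ => ?_⟩
  set T := t0 + 1 / (α * R0) with hT
  have hT0 : t0 ≤ T := by
    have : 0 < 1 / (α * R0) := by positivity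
    linarith
  by_contra! hs
  have hγc : ContinuousOn γ (Icc t0 T) :=
    fun t ht => (hγ t ht).2.continuousAt.continuousWithinAt
  have hmono := h.Rw_mono hγc (fun t ht => hγ t (Ioo_subset_Icc_self ht))
  have hRpos : ∀ t ∈ Icc t0 T, 0 < Rw p u v (t, γ t) := by
    intro t ht
    have := hmono ⟨le_rfl, hT0⟩ ht ht.1
    simp only [h0] at this
    exact hR0p.trans_le this
  have hr : ∀ t ∈ Icc t0 T, rI p u v (t, γ t) = r0 := by
    intro t ht
    have := eq_of_hasDerivAt_zero (fun t ht => h.hasDerivAt_rI (hγ t ht).1 (hγ t ht).2) ht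
    simp only [h0] at this
    exact this
  have huK : ∀ t ∈ Icc t0 T, -K ≤ u (t, γ t) := by
    intro t ht
    by_contra hlt
    have h1 := h.q_antitone (not_le.1 hlt).le
    have h2 := hr t ht
    have h3 := hs t ht
    simp only [rI, sI] at h2 h3
    linarith
  have hmono2 : MonotoneOn (fun t => -(Rw p u v (t, γ t))⁻¹ - α * t) (Icc t0 T) := by
    have hd : ∀ t ∈ Icc t0 T, HasDerivAt (fun t => -(Rw p u v (t, γ t))⁻¹ - α * t)
        (deriv (deriv p) (u (t, γ t)) /
          (4 * cs p (u (t, γ t)) ^ 2 * Real.sqrt (cs p (u (t, γ t)))) - α) t := by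
      intro t ht
      have h1 := (h.hasDerivAt_Rw (hγ t ht).1 (hγ t ht).2).fun_inv (hRpos t ht).ne'
      refine (h1.fun_neg.fun_sub ((hasDerivAt_id t).const_mul α)).congr_deriv ?_
      have := (hRpos t ht).ne'
      rw [mul_one, neg_div, neg_neg, mul_div_assoc, div_self (pow_ne_zero 2 this), mul_one]
    refine monotoneOn_of_hasDerivAt
      (fun t ht => (hd t ht).continuousAt.continuousWithinAt)
      (fun t ht => hd t (Ioo_subset_Icc_self ht)) ?_
    intro t ht
    have htI := Ioo_subset_Icc_self ht
    have hc := h.cs_pos (hγ t htI).1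
    have hcC : cs p (u (t, γ t)) ≤ C := h.cs_antitone (huK t htI)
    have hkk : k ≤ deriv (deriv p) (u (t, γ t)) := hw0 ⟨huK t htI, (hγ t htI).1.le⟩
    have hsc : 0 < Real.sqrt (cs p (u (t, γ t))) := Real.sqrt_pos.2 hc
    rw [sub_nonneg, hα]
    have hk0 := (h.hconv (u (t, γ t))).le
    gcongr
  have h1 := hmono2 ⟨le_rfl, hT0⟩ ⟨hT0, le_rfl⟩ hT0
  simp only [h0] at h1
  rw [← hR0] at h1
  have h2 : α * T = α * t0 + R0⁻¹ := by
    rw [hT]; field_simp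
  have h3 : 0 < (Rw p u v (T, γ T))⁻¹ := inv_pos.2 (hRpos T ⟨hT0, le_rfl⟩)
  linarith

/-- There is no hyperbolic point with `r_x > 0`. -/
lemma Sol.rx_nonpos (h : Sol p u v) {z : ℝ × ℝ} (hneg : u z < 0) : rx p u v z ≤ 0 := by
  obtain ⟨t0, x0⟩ := z
  by_contra! hrx
  obtain ⟨M, -, hM⟩ := bounded_of_periodic h.sI_continuous h.sI_periodic t0 t0
  set m := -M with hm
  have hm' : ∀ x, m ≤ sI p u v (t0, x) := fun x => (abs_le.1 (hM t0 ⟨le_rfl, le_rfl⟩ x)).1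
  obtain ⟨τ, hτ, hblow⟩ := h.exists_s_lt hneg hrx m
  set c0 := cs p (u (t0, x0)) with hc0
  have hc0p : 0 < c0 := h.cs_pos hneg
  -- after time `τ` the two families of characteristics get a time `1 / c0` to separate by `1`
  set T := t0 + τ + 1 / c0 with hT
  have hinv : 0 < 1 / c0 := by positivity
  obtain ⟨γ, h0, hγ⟩ := h.exists_char (T := T) (by linarith) hneg hrx
  have hs : ∀ t ∈ Icc t0 T, HasDerivAt (fun t => sI p u v (t, γ t))
      (-2 * cs p (u (t, γ t)) * sx p u v (t, γ t)) t :=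
    fun t ht => h.hasDerivAt_sI (hγ t ht).1 (hγ t ht).2
  have hr : ∀ t ∈ Icc t0 T, rI p u v (t, γ t) = rI p u v (t0, x0) := by
    intro t ht
    have := eq_of_hasDerivAt_zero (fun t ht => h.hasDerivAt_rI (hγ t ht).1 (hγ t ht).2) ht
    simp only [h0] at this
    exact this
  have hsubT : ∀ b ≤ t0 + τ, Icc t0 b ⊆ Icc t0 T :=
    fun b hb => Icc_subset_Icc_right (by linarith)
  obtain ⟨b, hb, hbm⟩ := hblow γ h0 (fun t ht => hγ t (hsubT _ le_rfl ht))
  obtain ⟨t1, ht1, ht1m, ht1d⟩ := exists_neg_deriv_below hb.1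
    (fun t ht => hs t (hsubT b hb.2 ht)) (by simpa only [h0] using hm' x0) hbm
  have ht1T : t1 ∈ Icc t0 T := hsubT b hb.2 ht1
  have hsub1 : Icc t1 T ⊆ Icc t0 T := Icc_subset_Icc_left ht1.1
  -- below `m` the derivative `s_x` cannot be negative, as `s` would come from time `t0`
  obtain ⟨hanti, hbelow⟩ := antitoneOn_below (fun t ht => hs t (hsub1 ht)) ht1m (by
    intro t ht htm
    have hc := h.cs_pos (hγ t (hsub1 ht)).1
    have hsx : 0 ≤ sx p u v (t, γ t) := by
      by_contra! hsx
      obtain ⟨y, hy⟩ := h.exists_past_s (t0 := t0) (hsub1 ht).1 (hγ t (hsub1 ht)).1 hsx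
      have := hm' y
      linarith
    nlinarith [mul_nonneg hc.le hsx])
  have hcge : ∀ t ∈ Icc t1 T, c0 ≤ cs p (u (t, γ t)) := by
    intro t ht
    refine h.cs_antitone (le_of_not_ge fun hge => ?_)
    have h1 := h.q_antitone hge
    have h2 := hr t (hsub1 ht)
    have h3 := hbelow t ht
    have h4 := hm' x0
    simp only [rI, sI] at h2 h3 h4
    linarith
  have hsx1 : 0 < sx p u v (t1, γ t1) := by
    have hc := h.cs_pos (hγ t1 ht1T).1
    by_contra! hle
    nlinarith [mul_nonneg hc.le (neg_nonneg.2 hle)]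
  obtain ⟨δ, hδ0, hδ⟩ := h.exists_char_s ht1T.2 (hγ t1 ht1T).1 hsx1
  have hdist : MonotoneOn (fun t => δ t - γ t - c0 * t) (Icc t1 T) := by
    have hd : ∀ t ∈ Icc t1 T, HasDerivAt (fun t => δ t - γ t - c0 * t)
        (cs p (u (t, δ t)) - -(cs p (u (t, γ t))) - c0 * 1) t := fun t ht =>
      ((hδ t ht).2.fun_sub (hγ t (hsub1 ht)).2).fun_sub ((hasDerivAt_id t).const_mul c0)
    refine monotoneOn_of_hasDerivAt (fun t ht => (hd t ht).continuousAt.continuousWithinAt)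
      (fun t ht => hd t (Ioo_subset_Icc_self ht)) ?_
    intro t ht
    have := hcge t (Ioo_subset_Icc_self ht)
    have := cs_nonneg (p := p) (u (t, δ t))
    linarith
  have hfar : 1 ≤ δ T - γ T := by
    have h1 := hdist ⟨le_rfl, ht1T.2⟩ ⟨ht1T.2, le_rfl⟩ ht1T.2
    simp only [hδ0] at h1
    have h2 : 1 ≤ c0 * (T - t1) := by
      have : 1 / c0 ≤ T - t1 := by linarith [ht1.2, hb.2]
      calc (1 : ℝ) = c0 * (1 / c0) := by field_simp
        _ ≤ _ := by gcongr
    linarith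
  obtain ⟨t2, ht2, ht2d⟩ : (1 : ℝ) ∈ (fun t => δ t - γ t) '' Icc t1 T := by
    refine intermediate_value_Icc ht1T.2 ?_ ⟨by simp [hδ0], hfar⟩
    exact fun t ht => ((hδ t ht).2.continuousAt.sub
      (hγ t (hsub1 ht)).2.continuousAt).continuousWithinAt
  simp only at ht2d
  have hlt : t1 < t2 := lt_of_le_of_ne ht2.1 (by rintro rfl; rw [hδ0] at ht2d; linarith)
  -- `δ` meets the translate `γ + 1` at time `t2`, so `s` takes the same value at `t1` and `t2`
  have hsame : sI p u v (t2, γ t2) = sI p u v (t1, γ t1) := by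
    have h1 := eq_of_hasDerivAt_zero
      (fun t ht => h.hasDerivAt_sI' (hδ t ht).1 (hδ t ht).2) ht2
    simp only [hδ0] at h1
    rw [show δ t2 = γ t2 + 1 by linarith, h.sI_periodic] at h1
    exact h1
  have hconst : ∀ t ∈ Icc t1 t2, sI p u v (t, γ t) = sI p u v (t1, γ t1) := by
    intro t ht
    have htT : t ∈ Icc t1 T := ⟨ht.1, ht.2.trans ht2.2⟩
    have h1 := hanti ⟨le_rfl, ht1T.2⟩ htT ht.1
    have h2 := hanti htT ht2 ht.2
    simp only at h1 h2
    linarith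
  have hz : HasDerivWithinAt (fun t => sI p u v (t, γ t)) 0 (Icc t1 t2) t1 :=
    (hasDerivWithinAt_const t1 (Icc t1 t2) (sI p u v (t1, γ t1))).congr hconst rfl
  have huniq := (uniqueDiffOn_Icc hlt t1 ⟨le_rfl, hlt.le⟩).eq_deriv _
    (hs t1 ht1T).hasDerivWithinAt hz
  linarith

/-- In the hyperbolic region all first derivatives vanish: `rx_nonpos` applied to the four
reflected solutions gives `r_x = s_x = 0`. -/
lemma Sol.dx_eq_zero (h : Sol p u v) {z : ℝ × ℝ} (hneg : u z < 0) :
    dx u z = 0 ∧ dx v z = 0 := by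
  obtain ⟨t, x⟩ := z
  have hc := h.cs_pos hneg
  have key : ∀ σ τ : ℝ, (σ = 1 ∨ σ = -1) → (τ = 1 ∨ τ = -1) →
      σ * dx v (t, x) - τ * (cs p (u (t, x)) * dx u (t, x)) ≤ 0 := by
    intro σ τ hσ hτ
    have e1 : σ * (σ * t) = t := by rcases hσ with rfl | rfl <;> ring
    have e2 : τ * (τ * x) = x := by rcases hτ with rfl | rfl <;> ring
    have h1 := (h.reflect hσ hτ).rx_nonpos (z := (σ * t, τ * x)) (by
      simp only [e1, e2]; exact hneg)
    rw [h.rx_reflect hτ] at h1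
    simpa only [e1, e2] using h1
  have k1 := key 1 1 (Or.inl rfl) (Or.inl rfl)
  have k2 := key 1 (-1) (Or.inl rfl) (Or.inr rfl)
  have k3 := key (-1) 1 (Or.inr rfl) (Or.inl rfl)
  have k4 := key (-1) (-1) (Or.inr rfl) (Or.inr rfl)
  have hcu : cs p (u (t, x)) * dx u (t, x) = 0 := by linarith
  exact ⟨(mul_eq_zero.1 hcu).resolve_left hc.ne', by linarith⟩

lemma fderiv_eq_zero {f : ℝ × ℝ → ℝ} {z : ℝ × ℝ} (h1 : dt f z = 0) (h2 : dx f z = 0) :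
    fderiv ℝ f z = 0 := by
  ext
  · simpa [dt] using h1
  · simpa [dx] using h2

lemma Sol.fderiv_u (h : Sol p u v) {z : ℝ × ℝ} (hneg : u z < 0) : fderiv ℝ u z = 0 :=
  fderiv_eq_zero (by rw [h.sys1, (h.dx_eq_zero hneg).2, neg_zero]) (h.dx_eq_zero hneg).1

lemma Sol.fderiv_v (h : Sol p u v) {z : ℝ × ℝ} (hneg : u z < 0) : fderiv ℝ v z = 0 :=
  fderiv_eq_zero (by rw [h.sys2, (h.dx_eq_zero hneg).1, mul_zero]) (h.dx_eq_zero hneg).2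

/-- The level set `{u = u z₀}` of a hyperbolic value is open and closed, hence everything. -/
lemma Sol.u_const (h : Sol p u v) {z0 : ℝ × ℝ} (hneg : u z0 < 0) (z : ℝ × ℝ) : u z = u z0 := by
  have hclopen : IsClopen {z | u z = u z0} := by
    refine ⟨isClosed_eq h.hu.continuous continuous_const, ?_⟩
    rw [Metric.isOpen_iff]
    intro y hy
    have hyneg : u y < 0 := by rw [show u y = u z0 from hy]; exact hneg
    obtain ⟨r, hr, hball⟩ := Metric.isOpen_iff.1
      (isOpen_lt h.hu.continuous continuous_const) y hyneg
    refine ⟨r, hr, fun w hw => ?_⟩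
    have := (convex_ball y r).is_const_of_fderivWithin_eq_zero (𝕜 := ℝ)
      h.u_diff.differentiableOn (fun a ha => by
        rw [fderivWithin_of_isOpen Metric.isOpen_ball ha]
        exact h.fderiv_u (hball ha)) hw (Metric.mem_ball_self hr)
    exact this.trans hy
  have := hclopen.eq_univ ⟨z0, rfl⟩
  exact (this ▸ mem_univ z : z ∈ {z | u z = u z0})

end

end PSys

/-- Theorem 2.3: for a `C²` solution of the p-system on the whole cylinder
(1-periodic in `x`), either the hyperbolic region `U₋ = {u < 0}` is the whole
cylinder and `u, v` are constants, or `U₋` is empty, i.e. `u ≥ 0` everywhere. -/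
theorem psystem_whole_cylinder_dichotomy
    (p : ℝ → ℝ) (hp : ContDiff ℝ 2 p) (hconv : ∀ w : ℝ, 0 < deriv (deriv p) w)
    (hp0 : p 0 = 0) (hp'0 : deriv p 0 = 0)
    (u v : ℝ × ℝ → ℝ) (hu : ContDiff ℝ 2 u) (hv : ContDiff ℝ 2 v)
    (hsys : PSystem p u v Set.univ)
    (huper : ∀ t x : ℝ, u (t, x + 1) = u (t, x))
    (hvper : ∀ t x : ℝ, v (t, x + 1) = v (t, x)) :
    ((∀ z : ℝ × ℝ, u z < 0) ∧ ∃ cu cv : ℝ, ∀ z : ℝ × ℝ, u z = cu ∧ v z = cv) ∨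
      (∀ z : ℝ × ℝ, 0 ≤ u z) := by
  have dtslice : ∀ f : ℝ × ℝ → ℝ, ContDiff ℝ 2 f → ∀ z : ℝ × ℝ,
      HasDerivAt (fun s => f (s, z.2)) (PSys.dt f z) z.1 := by
    intro f hf z
    have h1 : HasDerivAt (fun s : ℝ => (s, z.2)) ((1 : ℝ), (0 : ℝ)) z.1 :=
      (hasDerivAt_id z.1).prodMk (hasDerivAt_const z.1 z.2)
    exact (hf.differentiable (by norm_num) z).hasFDerivAt.comp_hasDerivAt z.1 h1
  have dxslice : ∀ f : ℝ × ℝ → ℝ, ContDiff ℝ 2 f → ∀ z : ℝ × ℝ,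
      HasDerivAt (fun y => f (z.1, y)) (PSys.dx f z) z.2 := by
    intro f hf z
    have h1 : HasDerivAt (fun y : ℝ => (z.1, y)) ((0 : ℝ), (1 : ℝ)) z.2 :=
      (hasDerivAt_const z.2 z.1).prodMk (hasDerivAt_id z.2)
    exact (hf.differentiable (by norm_num) z).hasFDerivAt.comp_hasDerivAt z.2 h1
  have h : PSys.Sol p u v :=
    { hp := hp, hconv := hconv, hp'0 := hp'0, hu := hu, hv := hv
      sys1 := fun z => by
        have h1 := (hsys z (Set.mem_univ z)).1
        rwa [(dtslice u hu z).deriv, (dxslice v hv z).deriv] at h1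
      sys2 := fun z => by
        have h1 := (hsys z (Set.mem_univ z)).2
        have h2 : HasDerivAt (fun y => p (u (z.1, y))) (deriv p (u z) * PSys.dx u z) z.2 :=
          HasDerivAt.comp z.2
            ((hp.differentiable (by norm_num) (u (z.1, z.2))).hasDerivAt) (dxslice u hu z)
        rwa [(dtslice v hv z).deriv, h2.deriv] at h1
      uper := huper, vper := hvper }
  by_cases hne : ∃ z0, u z0 < 0
  · obtain ⟨z0, hz0⟩ := hne
    have hall : ∀ z, u z < 0 := fun z => by rw [h.u_const hz0 z]; exact hz0
    refine Or.inl ⟨hall, u z0, v z0, fun z => ⟨h.u_const hz0 z, ?_⟩⟩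
    exact is_const_of_fderiv_eq_zero (𝕜 := ℝ) h.v_diff (fun y => h.fderiv_v (hall y)) z z0
  · push Not at hne
    exact Or.inr hne
end

section
/- Let (u, v) be a C²-smooth solution of the p-system on the whole cylinder ℝ × ℝ (1-periodic in x) satisfying u(t, x) ≥ 0 for all (t, x). Then u and v are constant functions. -/
open Set Filter Topology

/-- The derivative of `g` in the direction `e`; the directions `(1, 0)` and `(0, 1)` give the
partial derivatives in `t` and `x`. -/
noncomputable def dirD (e : ℝ × ℝ) (g : ℝ × ℝ → ℝ) (z : ℝ × ℝ) : ℝ := fderiv ℝ g z e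

lemma contDiff_dirD {n m : WithTop ℕ∞} (e : ℝ × ℝ) {g : ℝ × ℝ → ℝ} (hg : ContDiff ℝ n g)
    (hmn : m + 1 ≤ n) : ContDiff ℝ m (dirD e g) :=
  (hg.fderiv_right hmn).clm_apply contDiff_const

lemma hasDerivAt_slice_t {g : ℝ × ℝ → ℝ} (hg : Differentiable ℝ g) (t x : ℝ) :
    HasDerivAt (fun s => g (s, x)) (dirD (1, 0) g (t, x)) t :=
  (hg (t, x)).hasFDerivAt.comp_hasDerivAt t ((hasDerivAt_id t).prodMk (hasDerivAt_const t x))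

lemma hasDerivAt_slice_x {g : ℝ × ℝ → ℝ} (hg : Differentiable ℝ g) (t x : ℝ) :
    HasDerivAt (fun y => g (t, y)) (dirD (0, 1) g (t, x)) x :=
  (hg (t, x)).hasFDerivAt.comp_hasDerivAt x ((hasDerivAt_const x t).prodMk (hasDerivAt_id x))

lemma dirD_mul (e : ℝ × ℝ) {f g : ℝ × ℝ → ℝ} (hf : Differentiable ℝ f) (hg : Differentiable ℝ g)
    (z : ℝ × ℝ) : dirD e (fun z => f z * g z) z = f z * dirD e g z + g z * dirD e f z := by
  unfold dirD
  rw [fderiv_fun_mul (hf z) (hg z)]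
  simp

lemma dirD_neg (e : ℝ × ℝ) (f : ℝ × ℝ → ℝ) (z : ℝ × ℝ) :
    dirD e (fun z => - f z) z = - dirD e f z := by
  unfold dirD
  rw [fderiv_fun_neg]
  simp

lemma dirD_comp (e : ℝ × ℝ) {f : ℝ → ℝ} {g : ℝ × ℝ → ℝ} (hf : Differentiable ℝ f)
    (hg : Differentiable ℝ g) (z : ℝ × ℝ) :
    dirD e (fun z => f (g z)) z = deriv f (g z) * dirD e g z := by
  have h := (hf (g z)).hasDerivAt.comp_hasFDerivAt z (hg z).hasFDerivAt
  unfold dirD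
  rw [show (fun z => f (g z)) = f ∘ g from rfl, h.fderiv]
  simp

lemma dirD_exp_neg (e : ℝ × ℝ) {g : ℝ × ℝ → ℝ} (hg : Differentiable ℝ g) (z : ℝ × ℝ) :
    dirD e (fun z => Real.exp (- g z)) z = - (Real.exp (- g z) * dirD e g z) := by
  rw [dirD_comp (g := fun z => - g z) e Real.differentiable_exp hg.neg, Real.deriv_exp, dirD_neg]
  ring

lemma dirD_comm (e e' : ℝ × ℝ) {g : ℝ × ℝ → ℝ} (hg : ContDiff ℝ 2 g) (z : ℝ × ℝ) :
    dirD e (dirD e' g) z = dirD e' (dirD e g) z := by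
  have hd : DifferentiableAt ℝ (fderiv ℝ g) z :=
    (hg.fderiv_right (m := 1) (by norm_num)).differentiable (by norm_num) z
  have key (a b : ℝ × ℝ) : dirD a (dirD b g) z = fderiv ℝ (fderiv ℝ g) z a b := by
    change fderiv ℝ (fun z => fderiv ℝ g z b) z a = _
    rw [fderiv_clm_apply hd (differentiableAt_const b)]
    simp
  rw [key, key]
  exact (hg.contDiffAt.isSymmSndFDerivAt (by simp)) e e'

lemma eq_const_of_dirD_eq_zero {g : ℝ × ℝ → ℝ} (hg : Differentiable ℝ g)
    (h1 : ∀ z, dirD (1, 0) g z = 0) (h2 : ∀ z, dirD (0, 1) g z = 0) (z z' : ℝ × ℝ) :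
    g z = g z' := by
  refine is_const_of_fderiv_eq_zero hg (fun y => ?_) z z'
  ext
  · simpa [dirD] using h1 y
  · simpa [dirD] using h2 y

/-- Differentiation under the integral sign for a `C¹` function on the plane. -/
lemma hasDerivAt_integral_slice {g : ℝ × ℝ → ℝ} (hg : ContDiff ℝ 1 g) (a b t : ℝ) :
    HasDerivAt (fun s => ∫ x in a..b, g (s, x)) (∫ x in a..b, dirD (1, 0) g (t, x)) t := by
  have hd : Continuous (dirD (1, 0) g) :=
    (contDiff_dirD (n := 1) (m := 0) (1, 0) hg (by norm_num)).continuous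
  obtain ⟨C, hC⟩ := ((isCompact_closedBall t 1).prod
    (isCompact_uIcc (a := a) (b := b))).exists_bound_of_continuousOn hd.continuousOn
  refine (intervalIntegral.hasDerivAt_integral_of_dominated_loc_of_deriv_le
    (F := fun s x => g (s, x)) (F' := fun s x => dirD (1, 0) g (s, x)) (bound := fun _ => C)
    (Metric.closedBall_mem_nhds t one_pos) ?_ ?_ ?_ ?_ ?_ ?_).2
  · exact Eventually.of_forall fun s =>
      (hg.continuous.comp (Continuous.prodMk_right s)).aestronglyMeasurable
  · exact (hg.continuous.comp (Continuous.prodMk_right t)).intervalIntegrable a b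
  · exact (hd.comp (Continuous.prodMk_right t)).aestronglyMeasurable
  · exact Eventually.of_forall fun x hx s hs => hC (s, x) ⟨hs, uIoc_subset_uIcc hx⟩
  · exact intervalIntegrable_const
  · exact Eventually.of_forall fun x _ s _ =>
      hasDerivAt_slice_t (hg.differentiable (by norm_num)) s x

/-- A convex function on the whole line that is bounded above has zero derivative: otherwise a
tangent line would exceed the bound. -/
lemma deriv_eq_zero_of_convex_bounded {F F' F'' : ℝ → ℝ} (h1 : ∀ t, HasDerivAt F (F' t) t)
    (h2 : ∀ t, HasDerivAt F' (F'' t) t) (h3 : ∀ t, 0 ≤ F'' t) {C : ℝ} (hC : ∀ t, F t ≤ C)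
    (t : ℝ) : F' t = 0 := by
  have hdF : deriv F = F' := funext fun t => (h1 t).deriv
  have hmono : Monotone F' := monotone_of_deriv_nonneg (fun t => (h2 t).differentiableAt)
    fun t => by rw [(h2 t).deriv]; exact h3 t
  have hconv : ConvexOn ℝ univ F :=
    Monotone.convexOn_univ_of_deriv (fun t => (h1 t).differentiableAt) (hdF ▸ hmono)
  have tangent (s : ℝ) : F t + F' t * (s - t) ≤ F s := by
    rcases lt_trichotomy s t with h | h | h
    · have := hconv.slope_le_of_hasDerivAt (mem_univ s) (mem_univ t) h (h1 t)
      rw [slope_def_field, div_le_iff₀ (by linarith)] at this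
      linarith
    · simp [h]
    · have := hconv.le_slope_of_hasDerivAt (mem_univ t) (mem_univ s) h (h1 t)
      rw [slope_def_field, le_div_iff₀ (by linarith)] at this
      linarith
  by_contra hne
  -- At this point the tangent line at `t` has height `C + 1`.
  have h := tangent (t + (C + 1 - F t) / F' t)
  rw [add_sub_cancel_left, mul_div_cancel₀ _ hne] at h
  linarith [hC (t + (C + 1 - F t) / F' t)]

/-- The pointwise form of the convexity computation: for a solution, `(exp (-u))_tt` equals the
nonnegative density plus an exact `x`-derivative. -/
lemma dirD_dirD_exp {p : ℝ → ℝ} (hp : ContDiff ℝ 2 p) {u v : ℝ × ℝ → ℝ} (hu : ContDiff ℝ 2 u)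
    (hv : ContDiff ℝ 2 v) (hut : ∀ z, dirD (1, 0) u z = - dirD (0, 1) v z)
    (hvt : ∀ z, dirD (1, 0) v z = dirD (0, 1) (fun z => p (u z)) z) (z : ℝ × ℝ) :
    dirD (1, 0) (dirD (1, 0) fun z => Real.exp (- u z)) z =
      Real.exp (- u z) * (dirD (1, 0) u z ^ 2 + deriv p (u z) * dirD (0, 1) u z ^ 2) +
      dirD (0, 1) (fun z => Real.exp (- u z) * dirD (0, 1) (fun z => p (u z)) z) z := by
  have hud : Differentiable ℝ u := hu.differentiable (by norm_num)
  have hwd : Differentiable ℝ fun z => Real.exp (- u z) := hud.neg.exp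
  have hP : ContDiff ℝ 2 fun z => p (u z) := hp.comp hu
  have hD {g : ℝ × ℝ → ℝ} (hg : ContDiff ℝ 2 g) (e : ℝ × ℝ) : Differentiable ℝ (dirD e g) :=
    (contDiff_dirD (m := 1) e hg (by norm_num)).differentiable (by norm_num)
  -- The second-order equation `u_tt = -p(u)_xx`.
  have hutt : dirD (1, 0) (dirD (1, 0) u) z
      = - dirD (0, 1) (dirD (0, 1) fun z => p (u z)) z := by
    rw [show dirD (1, 0) u = fun z => - dirD (0, 1) v z from funext hut, dirD_neg,
      dirD_comm _ _ hv, show dirD (1, 0) v = _ from funext hvt]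
  rw [show (dirD (1, 0) fun z => Real.exp (- u z))
      = fun z => - (Real.exp (- u z) * dirD (1, 0) u z) from funext (dirD_exp_neg _ hud),
    dirD_neg, dirD_mul _ hwd (hD hu _), dirD_mul _ hwd (hD hP _), dirD_exp_neg _ hud,
    dirD_exp_neg _ hud, hutt, dirD_comp _ (hp.differentiable (by norm_num)) hud]
  ring

/-- Theorem 3.1 (elliptic case): a `C²` solution of the p-system on the whole
cylinder (1-periodic in `x`) with `u ≥ 0` everywhere is constant. -/
theorem psystem_elliptic_constant
    (p : ℝ → ℝ) (hp : ContDiff ℝ 2 p) (hconv : ∀ w : ℝ, 0 < deriv (deriv p) w)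
    (hp0 : p 0 = 0) (hp'0 : deriv p 0 = 0)
    (u v : ℝ × ℝ → ℝ) (hu : ContDiff ℝ 2 u) (hv : ContDiff ℝ 2 v)
    (hsys : PSystem p u v Set.univ)
    (huper : ∀ t x : ℝ, u (t, x + 1) = u (t, x))
    (hvper : ∀ t x : ℝ, v (t, x + 1) = v (t, x))
    (hnn : ∀ z : ℝ × ℝ, 0 ≤ u z) :
    (∃ cu : ℝ, ∀ z : ℝ × ℝ, u z = cu) ∧ (∃ cv : ℝ, ∀ z : ℝ × ℝ, v z = cv) := by
  have hud : Differentiable ℝ u := hu.differentiable (by norm_num)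
  have hvd : Differentiable ℝ v := hv.differentiable (by norm_num)
  have hpd : Differentiable ℝ p := hp.differentiable (by norm_num)
  have hP : ContDiff ℝ 2 fun z => p (u z) := hp.comp hu
  have hPd : Differentiable ℝ fun z => p (u z) := hP.differentiable (by norm_num)
  have hut (z : ℝ × ℝ) : dirD (1, 0) u z = - dirD (0, 1) v z := by
    have h := (hsys z (mem_univ z)).1
    rwa [(hasDerivAt_slice_t hud z.1 z.2).deriv, (hasDerivAt_slice_x hvd z.1 z.2).deriv] at h
  have hvt (z : ℝ × ℝ) : dirD (1, 0) v z = dirD (0, 1) (fun z => p (u z)) z := by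
    have h := (hsys z (mem_univ z)).2
    rwa [(hasDerivAt_slice_t hvd z.1 z.2).deriv, (hasDerivAt_slice_x hPd z.1 z.2).deriv] at h
  have hp'mono : StrictMono (deriv p) := strictMono_of_deriv_pos hconv
  have hp'nn (s : ℝ) (hs : 0 ≤ s) : 0 ≤ deriv p s := hp'0 ▸ hp'mono.monotone hs
  have hw : ContDiff ℝ 2 fun z => Real.exp (- u z) := hu.neg.exp
  have hwt : ContDiff ℝ 1 (dirD (1, 0) fun z => Real.exp (- u z)) :=
    contDiff_dirD _ hw (by norm_num)
  -- `G` is the dissipation density and `R` the flux in the identity `w_tt = G + R_x`.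
  set G : ℝ × ℝ → ℝ := fun z =>
    Real.exp (- u z) * (dirD (1, 0) u z ^ 2 + deriv p (u z) * dirD (0, 1) u z ^ 2) with hG
  set R : ℝ × ℝ → ℝ := fun z => Real.exp (- u z) * dirD (0, 1) (fun z => p (u z)) z with hR
  have hRC : ContDiff ℝ 1 R :=
    (hw.of_le (by norm_num)).mul (contDiff_dirD _ hP (by norm_num))
  have hRd : Differentiable ℝ R := hRC.differentiable (by norm_num)
  have hRx : Continuous (dirD (0, 1) R) :=
    (contDiff_dirD (m := 0) _ hRC (by norm_num)).continuous
  have hGC : Continuous G := by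
    have h1 : Continuous (deriv p) := hp.continuous_deriv (by norm_num)
    have h2 (e : ℝ × ℝ) : Continuous (dirD e u) :=
      (contDiff_dirD (m := 1) e hu (by norm_num)).continuous
    have h3 := h2 (1, 0)
    have h4 := h2 (0, 1)
    have h5 := hu.continuous
    fun_prop
  have hGnn (z : ℝ × ℝ) : 0 ≤ G z := by
    have := hp'nn _ (hnn z)
    positivity
  have hRper (t x : ℝ) : R (t, x + 1) = R (t, x) := by
    have hPx : dirD (0, 1) (fun z => p (u z)) (t, x + 1)
        = dirD (0, 1) (fun z => p (u z)) (t, x) := by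
      have h1 := (hasDerivAt_slice_x hPd t (x + 1)).comp_add_const x 1
      simp only [huper] at h1
      exact h1.unique (hasDerivAt_slice_x hPd t x)
    simp only [hR, hPx, huper]
  have hintR (t a : ℝ) : ∫ x in a..(a + 1), dirD (0, 1) R (t, x) = 0 := by
    rw [intervalIntegral.integral_eq_sub_of_hasDerivAt
      (fun x _ => hasDerivAt_slice_x hRd t x)
      ((hRx.comp (Continuous.prodMk_right t)).intervalIntegrable _ _), hRper, sub_self]
  have hF2 (a t : ℝ) :
      ∫ x in a..(a + 1), dirD (1, 0) (dirD (1, 0) fun z => Real.exp (- u z)) (t, x)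
        = ∫ x in a..(a + 1), G (t, x) := by
    simp only [dirD_dirD_exp hp hu hv hut hvt]
    rw [intervalIntegral.integral_add, hintR, add_zero]
    · exact (hGC.comp (Continuous.prodMk_right t)).intervalIntegrable _ _
    · exact (hRx.comp (Continuous.prodMk_right t)).intervalIntegrable _ _
  -- The period `[a, a + 1]` is arbitrary, so that every point is an endpoint of one.
  have hintG (a t : ℝ) : ∫ x in a..(a + 1), G (t, x) = 0 := by
    have h1 := hasDerivAt_integral_slice (hw.of_le (by norm_num)) a (a + 1)
    have h2 (t : ℝ) := hF2 a t ▸ hasDerivAt_integral_slice hwt a (a + 1) t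
    have hzero := deriv_eq_zero_of_convex_bounded h1 h2
      (fun t => intervalIntegral.integral_nonneg (by linarith) fun x _ => hGnn (t, x))
      (C := 1) (fun t => by
        have h := intervalIntegral.integral_mono_on (μ := MeasureTheory.volume) (a := a) (b := a + 1)
          (f := fun x => Real.exp (- u (t, x))) (g := fun _ => (1 : ℝ)) (by linarith)
          ((hw.continuous.comp (Continuous.prodMk_right t)).intervalIntegrable _ _)
          intervalIntegrable_const
          (fun x _ => Real.exp_le_one_iff.2 (neg_nonpos.2 (hnn (t, x))))
        rw [intervalIntegral.integral_const, add_sub_cancel_left, one_smul] at h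
        exact h)
    have h3 := h2 t
    rw [funext hzero] at h3
    exact h3.unique (hasDerivAt_const t 0)
  have hG0 (z : ℝ × ℝ) : G z = 0 := by
    by_contra hne
    have hpos := intervalIntegral.integral_pos (a := z.2) (b := z.2 + 1)
      (f := fun x => G (z.1, x)) (by linarith)
      (hGC.comp (Continuous.prodMk_right z.1)).continuousOn (fun x _ => hGnn _)
      ⟨z.2, ⟨le_rfl, by linarith⟩, lt_of_le_of_ne (hGnn _) (Ne.symm hne)⟩
    rw [hintG] at hpos
    exact lt_irrefl _ hpos
  have hsum (z : ℝ × ℝ) :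
      dirD (1, 0) u z ^ 2 = 0 ∧ deriv p (u z) * dirD (0, 1) u z ^ 2 = 0 := by
    have h := (mul_eq_zero.1 (hG0 z)).resolve_left (Real.exp_pos _).ne'
    have := hp'nn _ (hnn z)
    exact (add_eq_zero_iff_of_nonneg (by positivity) (by positivity)).1 h
  have hut0 (z : ℝ × ℝ) : dirD (1, 0) u z = 0 := pow_eq_zero_iff two_ne_zero |>.1 (hsum z).1
  have hPx0 (z : ℝ × ℝ) : dirD (0, 1) (fun z => p (u z)) z = 0 := by
    rw [dirD_comp _ hpd hud]
    simpa using (hsum z).2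
  have hPt0 (z : ℝ × ℝ) : dirD (1, 0) (fun z => p (u z)) z = 0 := by
    rw [dirD_comp _ hpd hud, hut0, mul_zero]
  have hpmono : StrictMonoOn p (Ici 0) :=
    strictMonoOn_of_deriv_pos (convex_Ici 0) hp.continuous.continuousOn fun x hx => by
      rw [interior_Ici] at hx
      exact hp'0 ▸ hp'mono hx
  refine ⟨⟨u 0, fun z => hpmono.injOn (hnn z) (hnn 0)
    (eq_const_of_dirD_eq_zero hPd hPt0 hPx0 z 0)⟩,
    ⟨v 0, fun z => eq_const_of_dirD_eq_zero hvd (fun z => ?_) (fun z => ?_) z 0⟩⟩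
  · rw [hvt, hPx0]
  · linarith [hut z, hut0 z]
end

section
/- Let (u, v) be a C² solution of the p-system, let i ∈ {1, 2}, and let x : [t₀, t₊) → ℝ be a characteristic curve of the i-th eigenvalue with t₊ < ∞ finite such that u(t, x(t)) → 0 as t → t₊ (the characteristic reaches the boundary of the hyperbolic region in finite forward time). Then the derivative of the corresponding Riemann invariant satisfies ∂rᵢ/∂x (t, x(t)) ≤ 0 for all t ∈ [t₀, t₊). -/
/-- Partial derivative in the first variable (time). -/
noncomputable def partialT (f : ℝ × ℝ → ℝ) (z : ℝ × ℝ) : ℝ := fderiv ℝ f z (1, 0)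

/-- Partial derivative in the second variable (space). -/
noncomputable def partialX (f : ℝ × ℝ → ℝ) (z : ℝ × ℝ) : ℝ := fderiv ℝ f z (0, 1)

lemma fderiv_eq_partials (f : ℝ × ℝ → ℝ) (z : ℝ × ℝ) (a b : ℝ) :
    fderiv ℝ f z (a, b) = a * partialT f z + b * partialX f z := by
  have h : ((a, b) : ℝ × ℝ) = a • ((1, 0) : ℝ × ℝ) + b • ((0, 1) : ℝ × ℝ) := by
    ext <;> simp
  rw [h, map_add, map_smul, map_smul]
  rfl

lemma contDiff_partialT {f : ℝ × ℝ → ℝ} (hf : ContDiff ℝ 2 f) : ContDiff ℝ 1 (partialT f) :=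
  (hf.fderiv_right (m := 1) (by norm_num)).clm_apply contDiff_const

lemma contDiff_partialX {f : ℝ × ℝ → ℝ} (hf : ContDiff ℝ 2 f) : ContDiff ℝ 1 (partialX f) :=
  (hf.fderiv_right (m := 1) (by norm_num)).clm_apply contDiff_const

lemma partialT_partialX_comm {f : ℝ × ℝ → ℝ} (hf : ContDiff ℝ 2 f) (z : ℝ × ℝ) :
    partialT (partialX f) z = partialX (partialT f) z := by
  have hd : DifferentiableAt ℝ (fderiv ℝ f) z :=
    ((hf.fderiv_right (m := 1) (by norm_num)).differentiable (by norm_num)) z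
  have hs : IsSymmSndFDerivAt ℝ f z := hf.contDiffAt.isSymmSndFDerivAt (by simp)
  have key : ∀ d e : ℝ × ℝ,
      fderiv ℝ (fun y => fderiv ℝ f y e) z d = fderiv ℝ (fderiv ℝ f) z d e := by
    intro d e
    have := (hd.hasFDerivAt.clm_apply (hasFDerivAt_const e z)).fderiv
    rw [this]
    simp
  calc partialT (partialX f) z = fderiv ℝ (fderiv ℝ f) z (1, 0) (0, 1) := key _ _
    _ = fderiv ℝ (fderiv ℝ f) z (0, 1) (1, 0) := hs _ _
    _ = partialX (partialT f) z := (key _ _).symm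

lemma hasDerivAt_space {f : ℝ × ℝ → ℝ} {t y : ℝ} (hf : DifferentiableAt ℝ f (t, y)) :
    HasDerivAt (fun y => f (t, y)) (partialX f (t, y)) y :=
  hf.hasFDerivAt.comp_hasDerivAt y ((hasDerivAt_const y t).prodMk (hasDerivAt_id y))

lemma hasDerivAt_time {f : ℝ × ℝ → ℝ} {t y : ℝ} (hf : DifferentiableAt ℝ f (t, y)) :
    HasDerivAt (fun s => f (s, y)) (partialT f (t, y)) t :=
  hf.hasFDerivAt.comp_hasDerivAt t ((hasDerivAt_id t).prodMk (hasDerivAt_const t y))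

lemma hasDerivAt_curve {f : ℝ × ℝ → ℝ} {x : ℝ → ℝ} {t x' : ℝ}
    (hf : DifferentiableAt ℝ f (t, x t)) (hx : HasDerivAt x x' t) :
    HasDerivAt (fun s => f (s, x s)) (partialT f (t, x t) + x' * partialX f (t, x t)) t := by
  have h : HasDerivAt (fun s => f (s, x s)) _ t :=
    hf.hasFDerivAt.comp_hasDerivAt t ((hasDerivAt_id t).prodMk hx)
  convert h using 1
  rw [fderiv_eq_partials, one_mul]

/-- The p-system in terms of partial derivatives, together with its `x`-derivative. -/
lemma psystem_partials {p : ℝ → ℝ} (hp : ContDiff ℝ 2 p) {u v : ℝ × ℝ → ℝ}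
    (hu : ContDiff ℝ 2 u) (hv : ContDiff ℝ 2 v) (hsys : PSystem p u v Set.univ) (z : ℝ × ℝ) :
    partialT u z = -partialX v z ∧
    partialT (partialX u) z = -partialX (partialX v) z ∧
    partialT (partialX v) z = deriv (deriv p) (u z) * partialX u z ^ 2
      + deriv p (u z) * partialX (partialX u) z := by
  have hud : Differentiable ℝ u := hu.differentiable (by norm_num)
  have hvd : Differentiable ℝ v := hv.differentiable (by norm_num)
  have hpd : Differentiable ℝ p := hp.differentiable (by norm_num)
  have hp1 : Differentiable ℝ (deriv p) := by
    have : ContDiff ℝ 1 (deriv p) := by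
      have h2 : ContDiff ℝ (1 + 1) p := by simpa [one_add_one_eq_two] using hp
      exact (contDiff_succ_iff_deriv.1 h2).2.2
    exact this.differentiable (by norm_num)
  have e1 : ∀ z, partialT u z = -partialX v z := by
    rintro ⟨t, y⟩
    have h := (hsys (t, y) (Set.mem_univ _)).1
    rwa [(hasDerivAt_time (hud _)).deriv, (hasDerivAt_space (hvd _)).deriv] at h
  have e2 : ∀ z, partialT v z = deriv p (u z) * partialX u z := by
    rintro ⟨t, y⟩
    have h := (hsys (t, y) (Set.mem_univ _)).2
    have hc : HasDerivAt (fun y => p (u (t, y))) (deriv p (u (t, y)) * partialX u (t, y)) y :=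
      (hpd _).hasDerivAt.comp y (hasDerivAt_space (hud (t, y)))
    rwa [(hasDerivAt_time (hvd _)).deriv, hc.deriv] at h
  refine ⟨e1 z, ?_, ?_⟩
  · rw [partialT_partialX_comm hu, funext e1]
    change fderiv ℝ (fun z => -partialX v z) z (0, 1) = -fderiv ℝ (partialX v) z (0, 1)
    simp [fderiv_fun_neg]
  · rw [partialT_partialX_comm hv, funext e2]
    obtain ⟨t, y⟩ := z
    have hux : Differentiable ℝ (partialX u) :=
      (contDiff_partialX hu).differentiable (by norm_num)
    have hc : HasDerivAt (fun y => deriv p (u (t, y)) * partialX u (t, y)) _ y :=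
      ((hp1 _).hasDerivAt.comp y (hasDerivAt_space (hud (t, y)))).mul
        (hasDerivAt_space (hux (t, y)))
    have hd : DifferentiableAt ℝ (fun z => deriv p (u z) * partialX u z) (t, y) :=
      ((hp1 _).comp _ (hud _)).mul (hux _)
    rw [(hasDerivAt_space hd).unique hc]
    simp only [Function.comp]
    ring

lemma hasDerivAt_qfun {p : ℝ → ℝ} (hp : Continuous (deriv p)) (w : ℝ) :
    HasDerivAt (qfun p) (-Real.sqrt (-(deriv p w))) w := by
  have hc : Continuous (fun s => Real.sqrt (-(deriv p s))) := hp.neg.sqrt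
  exact intervalIntegral.integral_hasDerivAt_left (hc.intervalIntegrable _ _)
    hc.stronglyMeasurable.stronglyMeasurableAtFilter hc.continuousAt

/-- The function `v_x + ε √(-p'(u)) u_x`, which is `∂rᵢ/∂x`. -/
noncomputable def riemannX (p : ℝ → ℝ) (u v : ℝ × ℝ → ℝ) (ε : ℝ) (z : ℝ × ℝ) : ℝ :=
  partialX v z + ε * Real.sqrt (-(deriv p (u z))) * partialX u z

lemma deriv_riemann_invariant {p : ℝ → ℝ} (hp : Continuous (deriv p)) {u v : ℝ × ℝ → ℝ}
    (hu : Differentiable ℝ u) (hv : Differentiable ℝ v) (ε t y : ℝ) :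
    deriv (fun y => v (t, y) - ε * qfun p (u (t, y))) y = riemannX p u v ε (t, y) := by
  have hq : HasDerivAt (fun y => qfun p (u (t, y)))
      (-Real.sqrt (-(deriv p (u (t, y)))) * partialX u (t, y)) y :=
    HasDerivAt.comp (h₂ := qfun p) y (hasDerivAt_qfun hp (u (t, y)))
      (hasDerivAt_space (hu (t, y)))
  rw [((hasDerivAt_space (hv (t, y))).fun_sub (hq.const_mul ε)).deriv, riemannX]
  ring

/-- The Riccati-type identity `(w √c)' = p''(u) √c w² / (4c²)` along a characteristic. -/
lemma weighted_hasDerivAt {p : ℝ → ℝ} (hp : ContDiff ℝ 2 p) {u v : ℝ × ℝ → ℝ}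
    (hu : ContDiff ℝ 2 u) (hv : ContDiff ℝ 2 v) (hsys : PSystem p u v Set.univ)
    {ε : ℝ} (hε : ε ^ 2 = 1) {x : ℝ → ℝ} {t : ℝ} (hneg : deriv p (u (t, x t)) < 0)
    (hx : HasDerivAt x (ε * Real.sqrt (-(deriv p (u (t, x t))))) t) :
    HasDerivAt (fun s => riemannX p u v ε (s, x s) *
        Real.sqrt (Real.sqrt (-(deriv p (u (s, x s))))))
      (deriv (deriv p) (u (t, x t)) * Real.sqrt (Real.sqrt (-(deriv p (u (t, x t))))) *
        riemannX p u v ε (t, x t) ^ 2 / (4 * Real.sqrt (-(deriv p (u (t, x t)))) ^ 2)) t := by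
  have hud : Differentiable ℝ u := hu.differentiable (by norm_num)
  have hp1 : Differentiable ℝ (deriv p) := by
    have : ContDiff ℝ 1 (deriv p) := by
      have h2 : ContDiff ℝ (1 + 1) p := by simpa [one_add_one_eq_two] using hp
      exact (contDiff_succ_iff_deriv.1 h2).2.2
    exact this.differentiable (by norm_num)
  have hux : Differentiable ℝ (partialX u) := (contDiff_partialX hu).differentiable (by norm_num)
  have hvx : Differentiable ℝ (partialX v) := (contDiff_partialX hv).differentiable (by norm_num)
  have hU := hasDerivAt_curve (hud (t, x t)) hx
  have hA := hasDerivAt_curve (hvx (t, x t)) hx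
  have hB := hasDerivAt_curve (hux (t, x t)) hx
  obtain ⟨e1, e2, e3⟩ := psystem_partials hp hu hv hsys (t, x t)
  have hP : HasDerivAt (fun s => -(deriv p (u (s, x s)))) _ t :=
    ((hp1 _).hasDerivAt.comp t hU).neg
  have hpos : 0 < -(deriv p (u (t, x t))) := by linarith
  have hc := hP.sqrt hpos.ne'
  have hcpos : 0 < Real.sqrt (-(deriv p (u (t, x t)))) := Real.sqrt_pos.2 hpos
  have hg := hc.sqrt hcpos.ne'
  have hgpos : 0 < Real.sqrt (Real.sqrt (-(deriv p (u (t, x t))))) := Real.sqrt_pos.2 hcpos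
  have hW := (hA.add ((hc.const_mul ε).mul hB)).mul hg
  have hc2 : deriv p (u (t, x t)) = -Real.sqrt (-(deriv p (u (t, x t)))) ^ 2 := by
    rw [Real.sq_sqrt hpos.le]; ring
  have hg2 : Real.sqrt (-(deriv p (u (t, x t))))
      = Real.sqrt (Real.sqrt (-(deriv p (u (t, x t))))) ^ 2 := by
    rw [Real.sq_sqrt hcpos.le]
  refine hW.congr_deriv ?_
  simp only [riemannX, Pi.add_apply, Pi.mul_apply]
  rw [e1, e2, e3]
  -- What remains is a rational identity in `g = √c` and the partial derivatives, modulo `ε² = 1`.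
  generalize Real.sqrt (Real.sqrt (-(deriv p (u (t, x t))))) = g at *
  generalize Real.sqrt (-(deriv p (u (t, x t)))) = c at *
  rw [hc2]
  subst hg2
  field_simp
  rcases sq_eq_sq_iff_eq_or_eq_neg.1 (hε.trans (one_pow 2).symm) with h | h <;> subst h <;> ring

/-- A curve whose speed tends to `0` at `tp` stays in a compact set just before `tp`. -/
lemma curve_bounded {x x' : ℝ → ℝ} {t₀ tp : ℝ} (ht : t₀ < tp)
    (hx : ∀ t ∈ Set.Ico t₀ tp, HasDerivAt x (x' t) t)
    (hx' : Filter.Tendsto x' (nhdsWithin tp (Set.Iio tp)) (nhds 0)) :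
    ∃ K : Set (ℝ × ℝ), IsCompact K ∧ ∀ᶠ t in nhdsWithin tp (Set.Iio tp), (t, x t) ∈ K := by
  have h1 : ∀ᶠ t in nhdsWithin tp (Set.Iio tp), ‖x' t‖ ≤ 1 := by
    have := hx'.norm.eventually (gt_mem_nhds (show ‖(0:ℝ)‖ < 1 by simp))
    filter_upwards [this] with t h using h.le
  obtain ⟨s, hs, hsub⟩ := (mem_nhdsLT_iff_exists_Ioo_subset' ht).1 h1
  obtain ⟨a, ha, hatp⟩ := exists_between (max_lt hs ht)
  have has : s < a := (le_max_left _ _).trans_lt ha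
  have hat : t₀ < a := (le_max_right _ _).trans_lt ha
  refine ⟨Set.Icc a tp ×ˢ Metric.closedBall (x a) (tp - a),
    isCompact_Icc.prod (isCompact_closedBall _ _), ?_⟩
  filter_upwards [Ioo_mem_nhdsLT hatp] with t htt
  refine ⟨⟨htt.1.le, htt.2.le⟩, ?_⟩
  have hb : ‖x t - x a‖ ≤ 1 * ‖t - a‖ := by
    refine (convex_Ico a tp).norm_image_sub_le_of_norm_hasDerivWithin_le (f := x) (f' := x')
      (fun y hy => (hx y ⟨hat.le.trans hy.1, hy.2⟩).hasDerivWithinAt)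
      (fun y hy => hsub ⟨has.trans_le hy.1, hy.2⟩) ⟨le_rfl, hatp⟩ ⟨htt.1.le, htt.2⟩
  rw [Metric.mem_closedBall, dist_eq_norm]
  rw [one_mul, Real.norm_of_nonneg (sub_nonneg.2 htt.1.le)] at hb
  linarith [htt.2]

/-- Lemma 2.1(1), forward time: if a characteristic curve of the `i`-th eigenvalue
(`ε = 1` for `i = 1`, `ε = -1` for `i = 2`, eigenvalue `λᵢ(u) = ε√(-p'(u))`,
Riemann invariant `rᵢ = v - ε·q(u)`) reaches the boundary of the hyperbolic region
in finite forward time `tp`, then `∂rᵢ/∂x (t, x(t)) ≤ 0` on `[t₀, tp)`. -/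
theorem psystem_characteristic_reaching_boundary_forward
    (p : ℝ → ℝ) (hp : ContDiff ℝ 2 p) (hconv : ∀ w : ℝ, 0 < deriv (deriv p) w)
    (hp0 : p 0 = 0) (hp'0 : deriv p 0 = 0)
    (u v : ℝ × ℝ → ℝ) (hu : ContDiff ℝ 2 u) (hv : ContDiff ℝ 2 v)
    (hsys : PSystem p u v Set.univ)
    (ε : ℝ) (hε : ε = 1 ∨ ε = -1)
    (t₀ tp : ℝ) (ht : t₀ < tp) (x : ℝ → ℝ)
    (hhyp : ∀ t ∈ Set.Ico t₀ tp, u (t, x t) < 0)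
    (hchar : ∀ t ∈ Set.Ico t₀ tp,
      HasDerivAt x (ε * Real.sqrt (-(deriv p (u (t, x t))))) t)
    (hreach : Filter.Tendsto (fun t => u (t, x t))
      (nhdsWithin tp (Set.Iio tp)) (nhds 0)) :
    ∀ t ∈ Set.Ico t₀ tp,
      deriv (fun y => v (t, y) - ε * qfun p (u (t, y))) (x t) ≤ 0 := by
  intro t htt
  have hpc : Continuous (deriv p) := hp.continuous_deriv (by norm_num)
  have hud : Differentiable ℝ u := hu.differentiable (by norm_num)
  have hvd : Differentiable ℝ v := hv.differentiable (by norm_num)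
  rw [deriv_riemann_invariant hpc hud hvd]
  have hε2 : ε ^ 2 = 1 := by rcases hε with h | h <;> subst h <;> norm_num
  have hneg : ∀ s ∈ Set.Ico t₀ tp, deriv p (u (s, x s)) < 0 := by
    intro s hs
    have := strictMono_of_deriv_pos hconv (hhyp s hs)
    rwa [hp'0] at this
  have hW := fun s (hs : s ∈ Set.Ico t₀ tp) =>
    weighted_hasDerivAt hp hu hv hsys hε2 (hneg s hs) (hchar s hs)
  set W : ℝ → ℝ := fun s => riemannX p u v ε (s, x s) *
        Real.sqrt (Real.sqrt (-(deriv p (u (s, x s))))) with hWdef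
  have hmono : MonotoneOn W (Set.Ico t₀ tp) := by
    refine monotoneOn_of_deriv_nonneg (convex_Ico _ _)
      (fun s hs => (hW s hs).continuousAt.continuousWithinAt)
      (fun s hs => (hW s (interior_subset hs)).differentiableAt.differentiableWithinAt) ?_
    intro s hs
    rw [(hW s (interior_subset hs)).deriv]
    have := (hconv (u (s, x s))).le
    positivity
  have hspeed : Filter.Tendsto (fun s => Real.sqrt (-(deriv p (u (s, x s)))))
      (nhdsWithin tp (Set.Iio tp)) (nhds 0) := by
    have h := (hpc.neg.sqrt.tendsto 0).comp hreach
    simpa [hp'0, Function.comp_def] using h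
  have hlim : Filter.Tendsto W (nhdsWithin tp (Set.Iio tp)) (nhds 0) := by
    obtain ⟨K, hK, hmem⟩ := curve_bounded ht hchar (by simpa using hspeed.const_mul ε)
    have hcont : Continuous (riemannX p u v ε) :=
      (contDiff_partialX hv).continuous.add
        ((continuous_const.mul (hpc.comp hud.continuous).neg.sqrt).mul
          (contDiff_partialX hu).continuous)
    obtain ⟨C, hC⟩ := hK.exists_bound_of_continuousOn hcont.continuousOn
    have hg : Filter.Tendsto (fun s => Real.sqrt (Real.sqrt (-(deriv p (u (s, x s))))))
        (nhdsWithin tp (Set.Iio tp)) (nhds 0) := by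
      simpa using hspeed.sqrt
    refine squeeze_zero_norm' ?_ (by simpa using hg.const_mul C)
    filter_upwards [hmem] with s hs
    rw [hWdef, norm_mul, Real.norm_of_nonneg (Real.sqrt_nonneg _)]
    exact mul_le_mul_of_nonneg_right (hC _ hs) (Real.sqrt_nonneg _)
  have hWt : W t ≤ 0 := by
    refine ge_of_tendsto hlim ?_
    filter_upwards [Ioo_mem_nhdsLT htt.2] with s hs
    exact hmono htt ⟨htt.1.trans hs.1.le, hs.2⟩ hs.1.le
  have hgpos : 0 < Real.sqrt (Real.sqrt (-(deriv p (u (t, x t))))) :=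
    Real.sqrt_pos.2 (Real.sqrt_pos.2 (by linarith [hneg t htt]))
  exact nonpos_of_mul_nonpos_left hWt hgpos
end
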